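/- Let E₁ and E₂ be independent fractal percolations in ℝ^d (with values in [0,1]^d) with common integer scale M ≥ 2 and probabilities p₁, p₂ satisfying p₁ > M^{-d}, p₂ > M^{-d} and p₁·p₂ > M^{-2d+1}. Then, almost surely conditioned on the event that both E₁ and E₂ are nonempty, the distance set D(E₁,E₂) := { |x − y| : x ∈ E₁, y ∈ E₂ } contains a nonempty open interval. -/

import Mathlib

open MeasureTheory Set ENNReal ProbabilityTheory Real

noncomputable section

/-- The alphabet indexing the `M^d` subcubes of a cube in `[0,1]^d`. -/
abbrev Alpha (d M : ℕ) : Type := Fin d → Fin M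

/-- Finite nonempty words over the alphabet; they index `M`-adic cubes. -/
abbrev Word (d M : ℕ) : Type := {w : List (Alpha d M) // w ≠ []}

/-- The sample space: `{0,1}`-labelings of all finite nonempty words. -/
abbrev PercSpace (d M : ℕ) : Type := Word d M → Bool

/-- `P` is the product measure making the labels i.i.d. Bernoulli(`p`). -/
def IsBernoulliPerc (d M : ℕ) (p : ℝ) (P : Measure (PercSpace d M)) : Prop :=
  IsProbabilityMeasure P ∧
    ∀ (S : Finset (Word d M)) (b : Word d M → Bool),
      P {ω | ∀ w ∈ S, ω w = b w} =
        ∏ w ∈ S, if b w then ENNReal.ofReal p else ENNReal.ofReal (1 - p)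

/-- A level-`w.length` cube is retained iff its word and every nonempty prefix
of its word carry label 1. -/
def Retained (d M : ℕ) (ω : PercSpace d M) (w : List (Alpha d M)) : Prop :=
  ∀ (u : List (Alpha d M)) (hu : u ≠ []), u <+: w → ω ⟨u, hu⟩ = true

/-- The `i`-th coordinate of the lower-left corner of the cube indexed by `w`. -/
def wordBase (d M : ℕ) (w : List (Alpha d M)) (i : Fin d) : ℝ :=
  ∑ j : Fin w.length, ((w.get j) i : ℝ) * (M : ℝ) ^ (-(j : ℤ) - 1)

/-- The closed `M`-adic cube of level `w.length` indexed by the word `w`. -/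
def wordCube (d M : ℕ) (w : List (Alpha d M)) : Set (EuclideanSpace ℝ (Fin d)) :=
  {x | ∀ i, wordBase d M w i ≤ x i ∧ x i ≤ wordBase d M w i + (M : ℝ) ^ (-(w.length : ℤ))}

/-- `E_n`, the union of the retained level-`n` cubes. -/
def approx (d M : ℕ) (ω : PercSpace d M) (n : ℕ) : Set (EuclideanSpace ℝ (Fin d)) :=
  ⋃ w ∈ {w : List (Alpha d M) | w.length = n ∧ Retained d M ω w}, wordCube d M w

/-- The fractal percolation set `E = ⋂_{n ≥ 1} E_n`. -/
def percLimit (d M : ℕ) (ω : PercSpace d M) : Set (EuclideanSpace ℝ (Fin d)) :=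
  ⋂ n ∈ {n : ℕ | 1 ≤ n}, approx d M ω n

/-- `P` is the joint distribution of two independent fractal percolations with
probabilities `p₁` and `p₂`. -/
def IsIndepBernoulliPair (d M : ℕ) (p₁ p₂ : ℝ)
    (P : Measure (PercSpace d M × PercSpace d M)) : Prop :=
  IsProbabilityMeasure P ∧
    ∀ (S₁ S₂ : Finset (Word d M)) (b₁ b₂ : Word d M → Bool),
      P {ω | (∀ w ∈ S₁, ω.1 w = b₁ w) ∧ (∀ w ∈ S₂, ω.2 w = b₂ w)} =
        (∏ w ∈ S₁, if b₁ w then ENNReal.ofReal p₁ else ENNReal.ofReal (1 - p₁)) *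
        (∏ w ∈ S₂, if b₂ w then ENNReal.ofReal p₂ else ENNReal.ofReal (1 - p₂))

/-!
Put the two percolations into unit cubes at relative position `Δ`, where `|Δ i| ≥ 3` for a
coordinate `i` which dominates the others. Solving `‖Δ + x - y‖ = r` for `x i` turns the pairs at
distance `r` into a Lipschitz graph of dimension `2d - 1`, whose volume inside a pair of cubes is an
additive weight. Follow the total weight of the surviving pairs, normalised by its mean, while
revealing in turn one more level of each percolation. Given the past, every such half-step adds
independent Bernoulli terms, so by Chernoff's bound the mass drops by a relative amount `δ_n`,
with `∑ δ_n < ∞`, only with superexponentially small probability. This requires each single term to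
be small, hence an exponential upper bound for the mass of the percolation inside the graph over one
fixed cube of the other; such bounds hold because `p₁`, `p₂` and `M^{-(d-1)}` are all smaller than
`p₁ p₂ M^d`. A union bound over exponentially many radii and the Lipschitz dependence of the weights
on `r` show that, with positive probability, the mass stays positive at all levels for all `r` in an
interval. That interval can be attained from every pair of cubes, up to the choice of two more
digits which brings their relative position into the form above, with a probability bounded below;
by Lévy's zero-one law it is attained almost surely on survival, and compactness passes to the
limit sets.
-/

namespace FractalPercolation

section BooleanCoordinates

variable {ι : Type*}

lemma measurable_cylinderEvents_of_dependsOn {β : Type*} [MeasurableSpace β]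
    {f : (ι → Bool) → β} {S : Set ι} (hS : S.Finite) (hf : DependsOn f S) :
    Measurable[cylinderEvents S] f := by
  have : Nonempty β := ⟨f fun _ => true⟩
  have : Finite S := hS
  obtain ⟨g, rfl⟩ := dependsOn_iff_exists_comp.1 hf
  exact (measurable_of_finite g).comp (measurable_restrict_cylinderEvents S)

lemma measurableSet_cylinderEvents_of_dependsOn {p : (ι → Bool) → Prop} {S : Set ι}
    (hS : S.Finite) (hp : DependsOn p S) : MeasurableSet[cylinderEvents S] {ω | p ω} :=
  (@measurableSet_setOfPred _ (cylinderEvents S) p).2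
    (measurable_cylinderEvents_of_dependsOn hS hp)

lemma measurableSet_cylinderEvents_apply_eq_true {i : ι} {S : Set ι} (hi : i ∈ S) :
    MeasurableSet[cylinderEvents S] {ω : ι → Bool | ω i = true} :=
  (measurable_cylinderEvent_apply hi : Measurable[cylinderEvents S] fun ω : ι → Bool => ω i)
    (measurableSet_singleton true)

lemma measurableSet_apply_eq_true (i : ι) : MeasurableSet {ω : ι → Bool | ω i = true} :=
  cylinderEvents_le_pi _ (measurableSet_cylinderEvents_apply_eq_true (mem_singleton i))

variable {P : Measure (ι → Bool)}

lemma indep_cylinderEvents (hP : iIndepFun (fun i (ω : ι → Bool) => ω i) P) {S T : Set ι}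
    (hST : Disjoint S T) : Indep (cylinderEvents S) (cylinderEvents T) P :=
  indep_iSup_of_disjoint (fun i => (measurable_pi_apply i).comap_le) hP.iIndep hST

lemma lintegral_ite_coordinate (hP : iIndepFun (fun i (ω : ι → Bool) => ω i) P)
    {D : Set ι} {i : ι} (hi : i ∉ D) {f g : (ι → Bool) → ℝ≥0∞}
    (hf : Measurable[cylinderEvents D] f) (hg : Measurable[cylinderEvents D] g) :
    ∫⁻ ω, (if ω i = true then f ω else g ω) ∂P =
      P {ω | ω i = true} * ∫⁻ ω, f ω ∂P + P {ω | ω i = true}ᶜ * ∫⁻ ω, g ω ∂P := by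
  set A : Set (ι → Bool) := {ω | ω i = true}
  have hA : MeasurableSet[cylinderEvents {i}] A :=
    measurableSet_cylinderEvents_apply_eq_true (mem_singleton i)
  have hAm : MeasurableSet A := cylinderEvents_le_pi A hA
  have factor : ∀ {h : (ι → Bool) → ℝ≥0∞} {B : Set (ι → Bool)},
      Measurable[cylinderEvents D] h → MeasurableSet[cylinderEvents {i}] B →
      ∫⁻ ω in B, h ω ∂P = P B * ∫⁻ ω, h ω ∂P := by
    intro h B hh hB
    have hBm := cylinderEvents_le_pi B hB
    have := lintegral_mul_eq_lintegral_mul_lintegral_of_independent_measurableSpace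
      cylinderEvents_le_pi cylinderEvents_le_pi
      (indep_cylinderEvents hP (disjoint_singleton_left.2 hi))
      ((measurable_indicator_const_iff (1 : ℝ≥0∞)).2 hB) hh
    rw [lintegral_indicator_const hBm, one_mul] at this
    rw [← this, ← lintegral_indicator hBm]
    exact lintegral_congr fun ω => by by_cases hω : ω ∈ B <;> simp [hω]
  rw [← lintegral_add_compl _ hAm, ← factor hf hA, ← factor hg hA.compl]
  congr 1
  · exact setLIntegral_congr_fun hAm fun ω hω => if_pos hω
  · exact setLIntegral_congr_fun hAm.compl fun ω hω => if_neg hω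

lemma measurable_mul_ofReal_exp {Ω : Type*} {_ : MeasurableSpace Ω} {F : Ω → ℝ≥0∞} {f : Ω → ℝ}
    (hF : Measurable F) (hf : Measurable f) :
    Measurable fun ω => F ω * ENNReal.ofReal (exp (f ω)) :=
  hF.mul (ENNReal.measurable_ofReal.comp (Real.measurable_exp.comp hf))

variable {α : Type*} {s : Finset α} {e : α → ι} {D : Set ι}

lemma lintegral_mul_exp_coordinate_le (hP : iIndepFun (fun i (ω : ι → Bool) => ω i) P)
    {i : ι} (hi : i ∉ D) {F : (ι → Bool) → ℝ≥0∞} {c κ : (ι → Bool) → ℝ}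
    (hF : Measurable[cylinderEvents D] F) (hc : Measurable[cylinderEvents D] c)
    (hκ : ∀ ω, F ω ≠ 0 →
      1 - P.real {ω | ω i = true} + P.real {ω | ω i = true} * exp (c ω) ≤ exp (κ ω)) :
    ∫⁻ ω, F ω * ENNReal.ofReal (exp (if ω i = true then c ω else 0)) ∂P ≤
      ∫⁻ ω, F ω * ENNReal.ofReal (exp (κ ω)) ∂P := by
  have := hP.isProbabilityMeasure
  set q : ℝ := P.real {ω | ω i = true} with hq
  have hq1 : q ≤ 1 := measureReal_le_one
  have hcompl : P {ω | ω i = true}ᶜ = ENNReal.ofReal (1 - q) := by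
    rw [hq, ← probReal_compl_eq_one_sub (measurableSet_apply_eq_true i), ofReal_measureReal]
  have hce : Measurable[cylinderEvents D] fun ω => F ω * ENNReal.ofReal (exp (c ω)) :=
    measurable_mul_ofReal_exp hF hc
  have hFm : Measurable F := hF.mono cylinderEvents_le_pi le_rfl
  have hcm : Measurable c := hc.mono cylinderEvents_le_pi le_rfl
  calc ∫⁻ ω, F ω * ENNReal.ofReal (exp (if ω i = true then c ω else 0)) ∂P
      = ∫⁻ ω, (if ω i = true then F ω * ENNReal.ofReal (exp (c ω)) else F ω) ∂P :=
        lintegral_congr fun ω => by split_ifs <;> simp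
    _ = ∫⁻ ω, F ω * ENNReal.ofReal (1 - q + q * exp (c ω)) ∂P := by
        rw [lintegral_ite_coordinate hP hi hce hF, hcompl, ← ofReal_measureReal, ← hq,
          ← lintegral_const_mul _ (by fun_prop), ← lintegral_const_mul _ hFm,
          ← lintegral_add_left (by fun_prop)]
        refine lintegral_congr fun ω => ?_
        rw [ENNReal.ofReal_add (by linarith) (by positivity), ENNReal.ofReal_mul (by positivity)]
        ring
    _ ≤ ∫⁻ ω, F ω * ENNReal.ofReal (exp (κ ω)) ∂P := by
        refine lintegral_mono fun ω => ?_
        by_cases hω : F ω = 0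
        · simp [hω]
        · gcongr
          exact hκ ω hω

lemma lintegral_mul_exp_sum_le (hP : iIndepFun (fun i (ω : ι → Bool) => ω i) P)
    (he : (s : Set α).InjOn e) (heD : ∀ x ∈ s, e x ∉ D)
    {F : (ι → Bool) → ℝ≥0∞} {c κ : α → (ι → Bool) → ℝ}
    (hF : Measurable[cylinderEvents D] F)
    (hc : ∀ x ∈ s, Measurable[cylinderEvents D] (c x))
    (hκ : ∀ x ∈ s, Measurable[cylinderEvents D] (κ x))
    (hcκ : ∀ x ∈ s, ∀ ω, F ω ≠ 0 →
      1 - P.real {ω | ω (e x) = true} + P.real {ω | ω (e x) = true} * exp (c x ω) ≤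
        exp (κ x ω)) :
    ∫⁻ ω, F ω * ENNReal.ofReal (exp (∑ x ∈ s, if ω (e x) = true then c x ω else 0)) ∂P ≤
      ∫⁻ ω, F ω * ENNReal.ofReal (exp (∑ x ∈ s, κ x ω)) ∂P := by
  classical
  induction s using Finset.induction_on generalizing F D with
  | empty => simp
  | insert x s hx ih =>
    simp only [Finset.mem_insert, forall_eq_or_imp] at heD hc hκ hcκ
    have exp_insert : ∀ (ω : ι → Bool) (g : α → ℝ),
        F ω * ENNReal.ofReal (exp (∑ y ∈ insert x s, g y)) =
          F ω * ENNReal.ofReal (exp (g x)) * ENNReal.ofReal (exp (∑ y ∈ s, g y)) :=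
      fun ω g => by
        rw [Finset.sum_insert hx, exp_add, ENNReal.ofReal_mul (exp_pos _).le, mul_assoc]
    have hD : cylinderEvents (X := fun _ : ι => Bool) D ≤ cylinderEvents (insert (e x) D) :=
      cylinderEvents_mono (subset_insert _ _)
    have hex : Measurable[cylinderEvents (insert (e x) D)] fun ω : ι → Bool => ω (e x) :=
      measurable_cylinderEvent_apply (mem_insert _ _)
    have hFx : Measurable[cylinderEvents (insert (e x) D)] fun ω =>
        F ω * ENNReal.ofReal (exp (if ω (e x) = true then c x ω else 0)) :=
      measurable_mul_ofReal_exp (hF.mono hD le_rfl)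
        (Measurable.ite (hex (measurableSet_singleton true)) (hc.1.mono hD le_rfl)
          measurable_const)
    have he_ne : ∀ y ∈ s, e y ≠ e x := fun y hy hyx =>
      hx (he (by simp) (by simp [hy]) hyx.symm ▸ hy)
    have hFs : Measurable[cylinderEvents D] fun ω =>
        F ω * ENNReal.ofReal (exp (∑ y ∈ s, κ y ω)) :=
      measurable_mul_ofReal_exp hF (Finset.measurable_fun_sum s hκ.2)
    calc _ = ∫⁻ ω, F ω * ENNReal.ofReal (exp (if ω (e x) = true then c x ω else 0)) *
          ENNReal.ofReal (exp (∑ y ∈ s, if ω (e y) = true then c y ω else 0)) ∂P := by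
          simp only [exp_insert]
      _ ≤ ∫⁻ ω, F ω * ENNReal.ofReal (exp (if ω (e x) = true then c x ω else 0)) *
          ENNReal.ofReal (exp (∑ y ∈ s, κ y ω)) ∂P :=
        ih (he.mono (by simp)) (fun y hy => by simp [he_ne y hy, heD.2 y hy]) hFx
          (fun y hy => (hc.2 y hy).mono hD le_rfl) (fun y hy => (hκ.2 y hy).mono hD le_rfl)
          fun y hy ω hω => hcκ.2 y hy ω (left_ne_zero_of_mul hω)
      _ = ∫⁻ ω, F ω * ENNReal.ofReal (exp (∑ y ∈ s, κ y ω)) *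
          ENNReal.ofReal (exp (if ω (e x) = true then c x ω else 0)) ∂P := by
        simp only [mul_right_comm]
      _ ≤ ∫⁻ ω, F ω * ENNReal.ofReal (exp (∑ y ∈ s, κ y ω)) *
          ENNReal.ofReal (exp (κ x ω)) ∂P :=
        lintegral_mul_exp_coordinate_le hP heD.1 hFs hc.1
          fun ω hω => hcκ.1 ω (left_ne_zero_of_mul hω)
      _ = _ := by simp only [exp_insert, mul_right_comm]

end BooleanCoordinates

variable {d M : ℕ}

section Survivors

/-- The finite set of words of length `n`, indexing the level-`n` cubes. -/
def words (d M n : ℕ) : Finset (List (Alpha d M)) :=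
  (List.finite_length_eq (Alpha d M) n).toFinset

@[simp] lemma mem_words {n : ℕ} {w : List (Alpha d M)} : w ∈ words d M n ↔ w.length = n := by
  simp [words]

lemma sum_words_succ {β : Type*} [AddCommMonoid β] (n : ℕ) (g : List (Alpha d M) → β) :
    ∑ w ∈ words d M (n + 1), g w = ∑ w ∈ words d M n, ∑ a, g (w ++ [a]) := by
  rw [← Finset.sum_product', eq_comm]
  refine Finset.sum_bij (fun x _ => x.1 ++ [x.2]) (fun x hx => ?_) (fun x _ y _ h => ?_)
    (fun w hw => ?_) fun _ _ => rfl
  · simpa using hx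
  · exact Prod.ext_iff.2 (List.append_singleton_inj.1 h)
  · rw [mem_words] at hw
    obtain rfl | ⟨u, a, rfl⟩ := List.eq_nil_or_concat' w
    · simp at hw
    · exact ⟨(u, a), by simpa using hw, rfl⟩

lemma words_zero : words d M 0 = {[]} := by ext w; simp

lemma card_words (d M n : ℕ) : (words d M n).card = (M ^ d) ^ n := by
  induction n with
  | zero => simp [words_zero]
  | succ n ih => rw [Finset.card_eq_sum_ones, sum_words_succ]; simp [ih, pow_succ]

/-- A joint labelling of the words of the two percolations, which are told apart by a boolean. -/
abbrev Config (d M : ℕ) : Type := Bool × Word d M → Bool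

/-- The labelling of the percolation `σ` in a joint labelling. -/
def side (σ : Bool) (ω : Config d M) : PercSpace d M := fun w => ω (σ, w)

/-- The variant of `Retained` in which the cubes of the first `J` levels are all kept. -/
def RetainedFrom (J : ℕ) (ω : PercSpace d M) (w : List (Alpha d M)) : Prop :=
  ∀ (u : List (Alpha d M)) (hu : u ≠ []), u <+: w → J < u.length → ω ⟨u, hu⟩ = true

lemma RetainedFrom.of_prefix {J : ℕ} {ω : PercSpace d M} {u w : List (Alpha d M)}
    (h : RetainedFrom J ω w) (huw : u <+: w) : RetainedFrom J ω u :=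
  fun v hv hvu => h v hv (hvu.trans huw)

lemma retainedFrom_concat_iff {J : ℕ} {ω : PercSpace d M} {w : List (Alpha d M)}
    (hw : J ≤ w.length) (a : Alpha d M) :
    RetainedFrom J ω (w ++ [a]) ↔ RetainedFrom J ω w ∧ ω ⟨w ++ [a], by simp⟩ = true := by
  refine ⟨fun h => ⟨h.of_prefix (List.prefix_append _ _),
    h _ _ List.prefix_rfl (by simpa using Nat.lt_succ_of_le hw)⟩, ?_⟩
  rintro ⟨h, ha⟩ u hu huw hJ
  obtain rfl | huw := List.prefix_concat_iff.1 huw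
  · exact ha
  · exact h u hu huw hJ

open Classical in
/-- The level-`n` words of the percolation `σ` that survive when the first `J` levels are all
kept. -/
def survivors (J : ℕ) (σ : Bool) (n : ℕ) (ω : Config d M) : Finset (List (Alpha d M)) :=
  {w ∈ words d M n | RetainedFrom J (side σ ω) w}

@[simp] lemma mem_survivors {J n : ℕ} {σ : Bool} {ω : Config d M} {w : List (Alpha d M)} :
    w ∈ survivors J σ n ω ↔ w.length = n ∧ RetainedFrom J (side σ ω) w := by
  simp [survivors]

lemma survivors_subset_words (J : ℕ) (σ : Bool) (n : ℕ) (ω : Config d M) :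
    survivors J σ n ω ⊆ words d M n :=
  fun _ hw => mem_words.2 (mem_survivors.1 hw).1

lemma survivors_self (J : ℕ) (σ : Bool) (ω : Config d M) :
    survivors J σ J ω = words d M J := by
  ext w
  simp only [mem_survivors, mem_words, and_iff_left_iff_imp]
  intro hw u hu huw hJ
  exact absurd (hw ▸ huw.length_le) hJ.not_ge

lemma sum_survivors_succ {J n : ℕ} (hn : J ≤ n) (σ : Bool) (ω : Config d M)
    (g : List (Alpha d M) → ℝ) :
    ∑ w ∈ survivors J σ (n + 1) ω, g w = ∑ w ∈ survivors J σ n ω, ∑ a,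
      if ω (σ, ⟨w ++ [a], by simp⟩) = true then g (w ++ [a]) else 0 := by
  classical
  rw [survivors, Finset.sum_filter, sum_words_succ, survivors, Finset.sum_filter]
  refine Finset.sum_congr rfl fun w hw => ?_
  simp only [retainedFrom_concat_iff (hn.trans_eq (mem_words.1 hw).symm), side, ite_and]
  split_ifs <;> simp

lemma mul_sum_survivors_ite (J n : ℕ) (σ : Bool) (ω : Config d M) (ψ : List (Alpha d M) → ℝ)
    (r : ℝ) (b : List (Alpha d M) × Alpha d M → Prop) [DecidablePred b] :
    r * ∑ w ∈ survivors J σ n ω, ∑ a, (if b (w, a) then ψ (w ++ [a]) else 0) =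
      ∑ x ∈ words d M n ×ˢ Finset.univ,
        if b x then (if x.1 ∈ survivors J σ n ω then r * ψ (x.1 ++ [x.2]) else 0) else 0 := by
  simp only [Finset.mul_sum, Finset.sum_product]
  rw [← Finset.sum_subset (survivors_subset_words J σ n ω)]
  · exact Finset.sum_congr rfl fun w hw => by simp [hw]
  · exact fun w _ hw => by simp [hw]

/-- The labels revealed once percolation `σ` is known up to level `n` and the other one
entirely. -/
def revealed (σ : Bool) (n : ℕ) : Set (Bool × Word d M) := {i | i.1 = σ → i.2.1.length ≤ n}

lemma revealed_mono (σ : Bool) {m n : ℕ} (hmn : m ≤ n) :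
    revealed (d := d) (M := M) σ m ⊆ revealed σ n :=
  fun _ hi hσ => (hi hσ).trans hmn

lemma finite_labels (m : Bool → ℕ) : {i : Bool × Word d M | i.2.1.length ≤ m i.1}.Finite := by
  have hfin : (univ ×ˢ {w : List (Alpha d M) | w.length ≤ max (m false) (m true)} :
      Set (Bool × List (Alpha d M))).Finite :=
    finite_univ.prod (List.finite_length_le _ _)
  refine (hfin.preimage (f := fun i : Bool × Word d M => (i.1, i.2.1)) ?_).subset ?_
  · rintro ⟨σ, u⟩ - ⟨τ, v⟩ - h
    simp only [Prod.mk.injEq] at h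
    exact Prod.ext h.1 (Subtype.ext h.2)
  · rintro ⟨σ, u⟩ hu
    cases σ <;> simp_all

lemma dependsOn_survivors (J : ℕ) (m : Bool → ℕ) :
    DependsOn (fun (ω : Config d M) σ => survivors J σ (m σ) ω)
      {i | J < i.2.1.length ∧ i.2.1.length ≤ m i.1} := by
  intro ω ω' h
  ext σ w
  simp only [mem_survivors, and_congr_right_iff]
  refine fun hw => forall₄_congr fun u hu huw hJ => ?_
  rw [side, side, h (σ, ⟨u, hu⟩) ⟨hJ, huw.length_le.trans_eq hw⟩]

lemma measurable_comp_survivors {β : Type*} [MeasurableSpace β] (J : ℕ) {m : Bool → ℕ}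
    {D : Set (Bool × Word d M)} (hD : {i | J < i.2.1.length ∧ i.2.1.length ≤ m i.1} ⊆ D)
    (g : (Bool → Finset (List (Alpha d M))) → β) :
    Measurable[cylinderEvents D] fun ω : Config d M => g fun σ => survivors J σ (m σ) ω :=
  (measurable_cylinderEvents_of_dependsOn ((finite_labels m).subset fun _ hi => hi.2) fun _ _ h =>
    congrArg g (dependsOn_survivors J m h)).mono (cylinderEvents_mono hD) le_rfl

lemma measurableSet_mem_survivors (J : ℕ) (σ : Bool) (n : ℕ) (w : List (Alpha d M)) :
    MeasurableSet[cylinderEvents (revealed σ n)] {ω : Config d M | w ∈ survivors J σ n ω} := by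
  have := measurable_comp_survivors (d := d) (M := M) J (m := fun τ => if τ = σ then n else 0)
    (D := revealed σ n) (fun i hi hσ => by simpa [hσ] using hi.2) fun s => w ∈ s σ
  simpa using (@measurableSet_setOfPred _ (cylinderEvents (revealed σ n)) _).2 this

end Survivors

section Generation

/-- `P` makes the labels independent, those of percolation `σ` being `true` with probability
`p σ`. -/
structure IsPairPercolation (p : Bool → ℝ) (P : Measure (Config d M)) : Prop where
  indep : iIndepFun (fun i (ω : Config d M) => ω i) P
  real_true : ∀ i, P.real {ω | ω i = true} = p i.1

lemma IsPairPercolation.isProbabilityMeasure {p : Bool → ℝ} {P : Measure (Config d M)}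
    (hP : IsPairPercolation p P) : IsProbabilityMeasure P :=
  hP.indep.isProbabilityMeasure

/-- A finitely additive set function on cubes, given by its values on the words of the cubes. -/
def IsAdditive (ψ : List (Alpha d M) → ℝ) : Prop := ∀ w, ∑ a, ψ (w ++ [a]) = ψ w

lemma IsAdditive.sum_words {ψ : List (Alpha d M) → ℝ} (hψ : IsAdditive ψ) (n : ℕ) :
    ∑ w ∈ words d M n, ψ w = ψ [] := by
  induction n with
  | zero => simp [words_zero]
  | succ n ih => simpa [sum_words_succ, hψ _] using ih

variable {p : Bool → ℝ} {P : Measure (Config d M)} {J n : ℕ} {σ : Bool}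
  {F : Config d M → ℝ≥0∞} {ψ : Config d M → List (Alpha d M) → ℝ}

lemma lintegral_exp_survivors_succ_le (hP : IsPairPercolation p P) (hn : J ≤ n)
    (hF : Measurable[cylinderEvents (revealed σ n)] F)
    (hψ : ∀ w, Measurable[cylinderEvents (revealed σ n)] fun ω => ψ ω w)
    (hadd : ∀ ω, IsAdditive (ψ ω)) {t t' : ℝ}
    (ht : ∀ ω, F ω ≠ 0 → ∀ w ∈ words d M (n + 1),
      1 - p σ + p σ * exp (t * ψ ω w) ≤ exp (t' * ψ ω w)) :
    ∫⁻ ω, F ω * ENNReal.ofReal (exp (t * ∑ w ∈ survivors J σ (n + 1) ω, ψ ω w)) ∂P ≤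
      ∫⁻ ω, F ω * ENNReal.ofReal (exp (t' * ∑ w ∈ survivors J σ n ω, ψ ω w)) ∂P := by
  classical
  let restrictTo (r : ℝ) (x : List (Alpha d M) × Alpha d M) (ω : Config d M) : ℝ :=
    if x.1 ∈ survivors J σ n ω then r * ψ ω (x.1 ++ [x.2]) else 0
  have measurable_restrictTo : ∀ r x,
      Measurable[cylinderEvents (revealed σ n)] (restrictTo r x) := fun r x =>
    Measurable.ite (measurableSet_mem_survivors J σ n x.1) ((hψ _).const_mul r) measurable_const
  let e (x : List (Alpha d M) × Alpha d M) : Bool × Word d M := (σ, ⟨x.1 ++ [x.2], by simp⟩)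
  have sum_survivors_next : ∀ ω, t * ∑ w ∈ survivors J σ (n + 1) ω, ψ ω w =
      ∑ x ∈ words d M n ×ˢ Finset.univ, if ω (e x) = true then restrictTo t x ω else 0 :=
    fun ω => by
      rw [sum_survivors_succ hn,
        ← mul_sum_survivors_ite J n σ ω (ψ ω) t fun x => ω (e x) = true]
  have sum_survivors : ∀ ω, t' * ∑ w ∈ survivors J σ n ω, ψ ω w =
      ∑ x ∈ words d M n ×ˢ Finset.univ, restrictTo t' x ω := fun ω => by
    simpa [(hadd ω) _, restrictTo] using mul_sum_survivors_ite J n σ ω (ψ ω) t' fun _ => True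
  simp only [sum_survivors_next, sum_survivors]
  refine lintegral_mul_exp_sum_le hP.indep (e := e) ?_ ?_ hF (fun x _ => measurable_restrictTo t x)
    (fun x _ => measurable_restrictTo t' x) ?_
  · exact fun x _ y _ hxy => Prod.ext_iff.2
      (List.append_singleton_inj.1 (congrArg Subtype.val (Prod.ext_iff.1 hxy).2))
  · rintro x hx
    simp_all [revealed, e]
  · intro x hx ω hω
    simp only [hP.real_true, restrictTo]
    split_ifs with h
    · exact ht ω hω _ (by simpa using hx)
    · simp

end Generation

section Deviation

lemma exp_neg_le_one_sub_add_sq {y : ℝ} (hy : 0 ≤ y) : exp (-y) ≤ 1 - y + y ^ 2 / 2 := by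
  rw [exp_neg, inv_le_iff_one_le_mul₀ (exp_pos y)]
  nlinarith [quadratic_le_exp_of_nonneg hy, sq_nonneg (1 - y), sq_nonneg y,
    mul_nonneg (by nlinarith [sq_nonneg (1 - y)] : 0 ≤ 1 - y + y ^ 2 / 2)
      (sub_nonneg.2 (quadratic_le_exp_of_nonneg hy)), pow_nonneg hy 4]

lemma bernoulli_exp_neg_le {q δ y : ℝ} (hq : 0 ≤ q) (hy : 0 ≤ y) (hyδ : y ≤ δ) :
    1 - q + q * exp (-y) ≤ exp (-(q * (1 - δ / 2) * y)) := by
  calc 1 - q + q * exp (-y) ≤ 1 - q + q * (1 - y + y ^ 2 / 2) := by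
        gcongr; exact exp_neg_le_one_sub_add_sq hy
    _ ≤ -(q * (1 - δ / 2) * y) + 1 := by
        nlinarith [mul_nonneg hq (mul_nonneg hy (sub_nonneg.2 hyδ))]
    _ ≤ exp (-(q * (1 - δ / 2) * y)) := add_one_le_exp _

lemma bernoulli_exp_le {q η y : ℝ} (hq : 0 ≤ q) (hη : η ≤ 1) (hy : 0 ≤ y) (hyη : y ≤ η) :
    1 - q + q * exp y ≤ exp (q * (1 + η) * y) := by
  have hexp : exp y ≤ 1 + y + y ^ 2 := by
    have := abs_exp_sub_one_sub_id_le (abs_le.2 ⟨by linarith, hyη.trans hη⟩)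
    linarith [le_abs_self (exp y - 1 - y)]
  calc 1 - q + q * exp y ≤ 1 - q + q * (1 + y + y ^ 2) := by gcongr
    _ ≤ q * (1 + η) * y + 1 := by nlinarith [mul_nonneg hq (mul_nonneg hy (sub_nonneg.2 hyη))]
    _ ≤ exp (q * (1 + η) * y) := add_one_le_exp _

variable {p : Bool → ℝ} {P : Measure (Config d M)} {J n : ℕ} {σ : Bool}

lemma measurable_sum_survivors {ψ : Config d M → List (Alpha d M) → ℝ}
    (hψ : ∀ w, Measurable[cylinderEvents (revealed σ n)] fun ω => ψ ω w) :
    Measurable[cylinderEvents (revealed σ n)] fun ω => ∑ w ∈ survivors J σ n ω, ψ ω w := by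
  classical
  have : (fun ω => ∑ w ∈ survivors J σ n ω, ψ ω w) = fun ω =>
      ∑ w ∈ words d M n, if w ∈ survivors J σ n ω then ψ ω w else 0 := by
    funext ω
    rw [← Finset.sum_subset (survivors_subset_words J σ n ω) fun w _ hw => if_neg hw]
    exact Finset.sum_congr rfl fun w hw => (if_pos hw).symm
  rw [this]
  exact Finset.measurable_fun_sum _ fun w _ =>
    Measurable.ite (measurableSet_mem_survivors J σ n w) (hψ w) measurable_const

lemma measure_sum_survivors_succ_lt_le (hP : IsPairPercolation p P) (hp : 0 ≤ p σ) (hn : J ≤ n)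
    {ψ : Config d M → List (Alpha d M) → ℝ}
    (hψ : ∀ w, Measurable[cylinderEvents (revealed σ n)] fun ω => ψ ω w)
    (hadd : ∀ ω, IsAdditive (ψ ω)) (hψ0 : ∀ ω w, 0 ≤ ψ ω w) {δ X Y : ℝ} (hδ : 0 < δ)
    (hY : 0 < Y) {A : Set (Config d M)} (hA : MeasurableSet[cylinderEvents (revealed σ n)] A)
    (hAX : ∀ ω ∈ A, X ≤ ∑ w ∈ survivors J σ n ω, ψ ω w)
    (hAY : ∀ ω ∈ A, ∀ w ∈ words d M (n + 1), ψ ω w ≤ Y) :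
    P (A ∩ {ω | ∑ w ∈ survivors J σ (n + 1) ω, ψ ω w <
        (1 - δ) * p σ * ∑ w ∈ survivors J σ n ω, ψ ω w}) ≤
      ENNReal.ofReal (exp (-(δ ^ 2 * p σ * X / (2 * Y)))) := by
  have := hP.isProbabilityMeasure
  let S (m : ℕ) (ω : Config d M) : ℝ := ∑ w ∈ survivors J σ m ω, ψ ω w
  let F : Config d M → ℝ≥0∞ :=
    A.indicator fun ω => ENNReal.ofReal (exp (δ / Y * ((1 - δ) * p σ * S n ω)))
  have hS' : Measurable (S (n + 1)) :=
    (measurable_sum_survivors fun w => (hψ w).mono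
      (cylinderEvents_mono (revealed_mono σ n.le_succ)) le_rfl).mono cylinderEvents_le_pi le_rfl
  have hF : Measurable[cylinderEvents (revealed σ n)] F :=
    Measurable.indicator (ENNReal.measurable_ofReal.comp (Real.measurable_exp.comp
      (((measurable_sum_survivors hψ).const_mul _).const_mul _))) hA
  have hFm : Measurable F := hF.mono cylinderEvents_le_pi le_rfl
  calc _ ≤ P {ω | 1 ≤ F ω * ENNReal.ofReal (exp (-(δ / Y) * S (n + 1) ω))} := by
        refine measure_mono fun ω ⟨hω, hlt⟩ => ?_
        simp only [F, mem_ofPred_eq, indicator_of_mem hω]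
        rw [← ENNReal.ofReal_mul (exp_pos _).le, ← exp_add, ENNReal.one_le_ofReal, one_le_exp_iff]
        nlinarith [mul_pos (div_pos hδ hY) (sub_pos.2 hlt)]
    _ ≤ ∫⁻ ω, F ω * ENNReal.ofReal (exp (-(δ / Y) * S (n + 1) ω)) ∂P := by
        simpa using mul_meas_ge_le_lintegral (μ := P)
          (f := fun ω => F ω * ENNReal.ofReal (exp (-(δ / Y) * S (n + 1) ω))) (by fun_prop) 1
    _ ≤ ∫⁻ ω, F ω * ENNReal.ofReal (exp (-(δ / Y * (p σ * (1 - δ / 2))) * S n ω)) ∂P := by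
        refine lintegral_exp_survivors_succ_le hP hn hF hψ hadd fun ω hω w hw => ?_
        have hle : δ / Y * ψ ω w ≤ δ := by
          rw [div_mul_eq_mul_div, div_le_iff₀ hY]
          gcongr
          exact hAY ω (mem_of_indicator_ne_zero hω) w hw
        refine (le_of_eq ?_).trans ((bernoulli_exp_neg_le hp
          (mul_nonneg (div_pos hδ hY).le (hψ0 ω w)) hle).trans_eq ?_) <;> ring_nf
    _ ≤ ∫⁻ _, ENNReal.ofReal (exp (-(δ ^ 2 * p σ * X / (2 * Y)))) ∂P := by
        refine lintegral_mono fun ω => ?_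
        by_cases hω : ω ∈ A
        · simp only [F, indicator_of_mem hω]
          rw [← ENNReal.ofReal_mul (exp_pos _).le, ← exp_add]
          gcongr
          have := mul_le_mul_of_nonneg_left (hAX ω hω)
            (by positivity : 0 ≤ δ ^ 2 * p σ / (2 * Y))
          calc _ = -(δ ^ 2 * p σ / (2 * Y) * S n ω) := by field_simp; ring
            _ ≤ -(δ ^ 2 * p σ / (2 * Y) * X) := neg_le_neg this
            _ = _ := by ring
        · simp [F, hω]
    _ = _ := by simp

lemma lintegral_exp_sum_survivors_le (hP : IsPairPercolation p P) (hp : 0 ≤ p σ)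
    {ψ : List (Alpha d M) → ℝ} (hadd : IsAdditive ψ) (hψ0 : ∀ w, 0 ≤ ψ w) {B γ η : ℝ}
    (hB : 0 ≤ B) (hB1 : B ≤ 1) (hBγ : B ≤ γ) (hψB : ∀ w, ψ w ≤ B ^ w.length)
    (hη : η ≤ 1) (hpγ : p σ * (1 + η) ≤ γ) (k : ℕ) {t : ℝ} (ht : 0 ≤ t) (htη : t * γ ^ k ≤ η) :
    ∫⁻ ω, ENNReal.ofReal (exp (t * ∑ w ∈ survivors J σ (J + k) ω, ψ w)) ∂P ≤
      ENNReal.ofReal (exp 1) := by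
  have := hP.isProbabilityMeasure
  have hγ : 0 ≤ γ := hB.trans hBγ
  induction k generalizing t with
  | zero =>
    simp only [survivors_self, add_zero, hadd.sum_words]
    refine (lintegral_mono fun _ => ENNReal.ofReal_le_ofReal
      (exp_le_exp.2 (?_ : t * ψ [] ≤ 1))).trans_eq (by simp)
    have h1 : ψ [] ≤ 1 := by simpa using hψB []
    have h2 : t ≤ η := by simpa using htη
    nlinarith [hψ0 [], h1, h2]
  | succ k ih =>
    have ht' : t * γ * γ ^ k ≤ η := by rwa [mul_assoc, ← pow_succ']
    refine le_trans ?_ (ih (mul_nonneg ht hγ) ht')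
    have step := lintegral_exp_survivors_succ_le hP (J.le_add_right k) (σ := σ) (F := 1)
      (ψ := fun _ => ψ) (t := t) (t' := t * γ) measurable_const (fun _ => measurable_const)
      (fun _ => hadd) fun _ _ w hw => ?_
    · simpa [add_assoc] using step
    · have hψγ : ψ w ≤ γ ^ (k + 1) := by
        refine (hψB w).trans ?_
        rw [mem_words.1 hw, add_assoc, pow_add]
        exact (mul_le_of_le_one_left (by positivity) (pow_le_one₀ hB hB1)).trans (by gcongr)
      refine (bernoulli_exp_le hp hη (mul_nonneg ht (hψ0 w)) (le_trans (by gcongr) htη)).trans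
        (exp_le_exp.2 ?_)
      nlinarith [mul_le_mul_of_nonneg_right hpγ (mul_nonneg ht (hψ0 w))]

lemma measure_le_sum_survivors_le (hP : IsPairPercolation p P) (hp : 0 ≤ p σ)
    {ψ : List (Alpha d M) → ℝ} (hadd : IsAdditive ψ) (hψ0 : ∀ w, 0 ≤ ψ w) {B γ η : ℝ}
    (hB : 0 ≤ B) (hB1 : B ≤ 1) (hBγ : B ≤ γ) (hψB : ∀ w, ψ w ≤ B ^ w.length) (hη0 : 0 < η)
    (hη : η ≤ 1) (hpγ : p σ * (1 + η) ≤ γ) (hγ : 0 < γ) (k : ℕ) (K : ℝ) :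
    P {ω | K / η * γ ^ k ≤ ∑ w ∈ survivors J σ (J + k) ω, ψ w} ≤
      ENNReal.ofReal (exp (1 - K)) := by
  let S (ω : Config d M) : ℝ := ∑ w ∈ survivors J σ (J + k) ω, ψ w
  have hS : Measurable S :=
    (measurable_sum_survivors (ψ := fun _ => ψ) fun _ => measurable_const).mono
      cylinderEvents_le_pi le_rfl
  have hbound := lintegral_exp_sum_survivors_le (J := J) hP hp hadd hψ0 hB hB1 hBγ hψB hη hpγ
    k (t := η / γ ^ k) (by positivity) (by field_simp; rfl)
  calc P {ω | K / η * γ ^ k ≤ S ω}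
      ≤ P {ω | ENNReal.ofReal (exp K) ≤ ENNReal.ofReal (exp (η / γ ^ k * S ω))} := by
        refine measure_mono fun ω hω => ENNReal.ofReal_le_ofReal (exp_le_exp.2 ?_)
        calc K = η / γ ^ k * (K / η * γ ^ k) := by field_simp
          _ ≤ η / γ ^ k * S ω := by gcongr; exact hω
    _ ≤ (∫⁻ ω, ENNReal.ofReal (exp (η / γ ^ k * S ω)) ∂P) / ENNReal.ofReal (exp K) :=
        meas_ge_le_lintegral_div (by fun_prop) (by simp [exp_pos]) ENNReal.ofReal_ne_top
    _ ≤ ENNReal.ofReal (exp 1) / ENNReal.ofReal (exp K) := by gcongr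
    _ = ENNReal.ofReal (exp (1 - K)) := by
        rw [← ENNReal.ofReal_div_of_pos (exp_pos K), exp_sub]

end Deviation

section PairMass

/-- A finitely additive weight on pairs of cubes, bounded like the `(2d-1)`-dimensional measure of
the product of two cubes inside a graph over either of them. -/
structure IsWeight (f : List (Alpha d M) → List (Alpha d M) → ℝ) : Prop where
  nonneg : ∀ u v, 0 ≤ f u v
  additive_left : ∀ v, IsAdditive fun u => f u v
  additive_right : ∀ u, IsAdditive (f u)
  le_left : ∀ u v, f u v ≤ (M : ℝ)⁻¹ ^ (d * u.length + (d - 1) * v.length)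
  le_right : ∀ u v, f u v ≤ (M : ℝ)⁻¹ ^ (d * v.length + (d - 1) * u.length)

lemma IsWeight.swap {f : List (Alpha d M) → List (Alpha d M) → ℝ} (hf : IsWeight f) :
    IsWeight fun u v => f v u where
  nonneg u v := hf.nonneg v u
  additive_left := hf.additive_right
  additive_right := hf.additive_left
  le_left u v := hf.le_right v u
  le_right u v := hf.le_left v u

/-- The weight carried by the surviving pairs of level `(n, m)`, the first level being that of
percolation `σ`. -/
def pairMass (f : List (Alpha d M) → List (Alpha d M) → ℝ) (J : ℕ) (σ : Bool) (n m : ℕ)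
    (ω : Config d M) : ℝ :=
  ∑ u ∈ survivors J σ n ω, ∑ v ∈ survivors J (!σ) m ω, f u v

lemma pairMass_swap (f : List (Alpha d M) → List (Alpha d M) → ℝ) (J : ℕ) (σ : Bool) (n m : ℕ)
    (ω : Config d M) : pairMass (fun u v => f v u) J (!σ) m n ω = pairMass f J σ n m ω := by
  rw [pairMass, Bool.not_not, Finset.sum_comm, pairMass]

/-- Growth rates with which the contact mass of two percolations is controlled: each generation
multiplies it by at least `ρ` with high probability, the maximal weight carried by a surviving cube
decays at rate `γ`, and `β` measures the room left between the two. -/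
structure GrowthRates (d M : ℕ) (p : Bool → ℝ) where
  (δ ρ η γ β : ℝ)
  δ_pos : 0 < δ
  δ_lt_one : δ < 1
  ρ_pos : 0 < ρ
  ρ_lt : ρ < (1 - δ) ^ 2 * (p false * p true)
  η_pos : 0 < η
  η_le_one : η ≤ 1
  mul_le_γ : ∀ σ, p σ * (1 + η) ≤ γ
  inv_pow_le_γ : (M : ℝ)⁻¹ ^ (d - 1) ≤ γ
  one_lt_β : 1 < β
  γ_mul_le : γ * β ^ 2 ≤ ρ * (M : ℝ) ^ d

variable {p : Bool → ℝ}

lemma inv_natCast_pow_pred [NeZero M] (hd : 1 ≤ d) :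
    (M : ℝ)⁻¹ ^ (d - 1) = M / (M : ℝ) ^ d := by
  have hM : (M : ℝ) ≠ 0 := NeZero.ne _
  obtain ⟨k, rfl⟩ := Nat.exists_eq_add_of_le' hd
  rw [Nat.add_sub_cancel, pow_succ, inv_pow]
  field_simp

lemma exists_pos_forall_add_le {γ : ℝ} (hγ : ∀ σ, p σ < γ) :
    ∃ η, 0 < η ∧ η ≤ 1 ∧ ∀ σ, p σ + η ≤ γ := by
  refine ⟨min 1 (min (γ - p false) (γ - p true)), ?_, min_le_left _ _, ?_⟩
  · simp [hγ]
  · refine Bool.forall_bool.2 ⟨?_, ?_⟩ <;> simp [← le_sub_iff_add_le']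

lemma exists_growthRates [NeZero M] (hd : 1 ≤ d) (hp : ∀ σ, 0 < p σ) (hp1 : ∀ σ, p σ ≤ 1)
    (hpd : ∀ σ, 1 < p σ * (M : ℝ) ^ d)
    (hprod : (M : ℝ) < p false * p true * ((M : ℝ) ^ d * (M : ℝ) ^ d)) :
    Nonempty (GrowthRates d M p) := by
  have hM0 : (0 : ℝ) < M := by exact_mod_cast NeZero.pos M
  set D : ℝ := (M : ℝ) ^ d
  have hD : 0 < D := by positivity
  set Q : ℝ := p false * p true with hQ
  have hQ0 : 0 < Q := mul_pos (hp _) (hp _)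
  obtain ⟨γ, hγ0, hγQ⟩ : ∃ γ, (max (max (p false) (p true)) (M / D)) < γ ∧ γ < Q * D := by
    refine exists_between (max_lt (max_lt ?_ ?_) ?_)
    · nlinarith [hp false, hpd true]
    · nlinarith [hp true, hpd false]
    · rw [div_lt_iff₀ hD]; linarith
  simp only [max_lt_iff] at hγ0
  obtain ⟨⟨hγf, hγt⟩, hγM⟩ := hγ0
  have hγ : 0 < γ := (hp false).trans hγf
  obtain ⟨ρ, hρ, hρQ⟩ : ∃ ρ, γ / D < ρ ∧ ρ < Q := exists_between (by rwa [div_lt_iff₀ hD])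
  have hρ0 : 0 < ρ := (by positivity : 0 < γ / D).trans hρ
  have hQ1 : Q ≤ 1 := mul_le_one₀ (hp1 _) (hp _).le (hp1 _)
  obtain ⟨η, hη0, hη1, hη⟩ := exists_pos_forall_add_le (Bool.forall_bool.2 ⟨hγf, hγt⟩)
  exact ⟨{
    δ := (Q - ρ) / 4
    ρ := ρ
    η := η
    γ := γ
    β := √(ρ * D / γ)
    δ_pos := by linarith
    δ_lt_one := by linarith
    ρ_pos := hρ0
    ρ_lt := by
      rw [← hQ]
      nlinarith [mul_nonneg hQ0.le (sq_nonneg ((Q - ρ) / 4)),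
        mul_nonneg (sub_pos.2 hρQ).le (sub_nonneg.2 hQ1)]
    η_pos := hη0
    η_le_one := hη1
    mul_le_γ := fun σ => by nlinarith [hη σ, hp1 σ]
    inv_pow_le_γ := inv_natCast_pow_pred (M := M) hd ▸ hγM.le
    one_lt_β := by
      rw [lt_sqrt one_pos.le, one_pow, one_lt_div hγ]
      rwa [div_lt_iff₀ hD] at hρ
    γ_mul_le := by
      rw [sq_sqrt (by positivity), mul_div_cancel₀ _ hγ.ne'] }⟩

namespace GrowthRates

variable (R : GrowthRates d M p)

lemma γ_pos (hp : ∀ σ, 0 < p σ) : 0 < R.γ :=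
  (mul_pos (hp true) (by linarith [R.η_pos])).trans_le (R.mul_le_γ true)

lemma rate_pos (hp : ∀ σ, 0 < p σ) : 0 < (1 - R.δ) * (p false * p true) :=
  mul_pos (sub_pos.2 R.δ_lt_one) (mul_pos (hp _) (hp _))

/-- A bound for the probability that generation `n` fails to grow from the threshold
`a * R.ρ ^ (n - J)`. -/
def failure (a : ℝ) (n : ℕ) : ℝ :=
  exp (-(R.δ ^ 2 * R.η * ((1 - R.δ) * (p false * p true) * a) / 2 * R.β ^ n)) +
    ((M : ℝ) ^ d) ^ (n + 1) * exp (1 - R.β ^ n)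

lemma failure_nonneg (a : ℝ) (n : ℕ) : 0 ≤ R.failure a n := by
  unfold failure; positivity

lemma ρ_le_one (hp : ∀ σ, 0 < p σ) (hp1 : ∀ σ, p σ ≤ 1) : R.ρ ≤ 1 := by
  have hQ : p false * p true ≤ 1 := mul_le_one₀ (hp1 _) (hp _).le (hp1 _)
  have hδ : (1 - R.δ) ^ 2 ≤ 1 :=
    pow_le_one₀ (sub_nonneg.2 R.δ_lt_one.le) (by linarith [R.δ_pos])
  exact R.ρ_lt.le.trans (mul_le_one₀ hδ (mul_pos (hp _) (hp _)).le hQ)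

lemma ρ_le_γ (hp : ∀ σ, 0 < p σ) (hp1 : ∀ σ, p σ ≤ 1) : R.ρ ≤ R.γ := by
  have hQ : p false * p true ≤ p true := mul_le_of_le_one_left (hp _).le (hp1 _)
  have hδ : (1 - R.δ) ^ 2 ≤ 1 :=
    pow_le_one₀ (sub_nonneg.2 R.δ_lt_one.le) (by linarith [R.δ_pos])
  nlinarith [R.ρ_lt, R.mul_le_γ true, R.η_pos, hp true, mul_pos (hp false) (hp true)]

/-- This is where `p₁`, `p₂` and `M⁻¹ ^ (d - 1)` being smaller than `p₁ p₂ M ^ d` enters. -/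
lemma γ_pow_mul_le (hp : ∀ σ, 0 < p σ) (hp1 : ∀ σ, p σ ≤ 1) {J n N : ℕ} (hJ : J ≤ n)
    (hN : N = n ∨ N = n + 1) :
    R.γ ^ (N - J) * R.β ^ n * R.β ^ n ≤ R.ρ ^ (n - J) * ((M : ℝ) ^ d) ^ (n + 1) := by
  set D : ℝ := (M : ℝ) ^ d
  have hγ := R.γ_pos hp
  have hβ : 1 ≤ R.β ^ 2 := one_le_pow₀ R.one_lt_β.le
  have hρ := R.ρ_pos
  have hβD : R.β ^ 2 ≤ D := by
    have := R.γ_mul_le.trans (mul_le_mul_of_nonneg_right (R.ρ_le_γ hp hp1) (by positivity))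
    exact le_of_mul_le_mul_left this hγ
  have hγD : R.γ ≤ D := by
    nlinarith [R.γ_mul_le, R.ρ_le_one hp hp1, (by positivity : 0 ≤ D)]
  obtain ⟨k, rfl⟩ := Nat.exists_eq_add_of_le hJ
  have hlast : R.γ ^ (N - J) ≤ R.γ ^ k * D := by
    rcases hN with rfl | rfl
    · simpa using le_mul_of_one_le_right (by positivity) (hβ.trans hβD)
    · rw [show J + k + 1 - J = k + 1 by omega, pow_succ]
      gcongr
  calc R.γ ^ (N - J) * R.β ^ (J + k) * R.β ^ (J + k)
      ≤ R.γ ^ k * D * R.β ^ (J + k) * R.β ^ (J + k) := by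
        have := R.one_lt_β
        gcongr
    _ = (R.γ * R.β ^ 2) ^ k * (R.β ^ 2) ^ J * D := by ring
    _ ≤ (R.ρ * D) ^ k * D ^ J * D := by
        have := R.γ_mul_le
        gcongr
    _ = R.ρ ^ (J + k - J) * D ^ (J + k + 1) := by rw [Nat.add_sub_cancel_left]; ring

end GrowthRates

variable {P : Measure (Config d M)} {J n N : ℕ} {f : List (Alpha d M) → List (Alpha d M) → ℝ}

lemma measurable_sum_survivors_other (σ : Bool) (w : List (Alpha d M)) :
    Measurable[cylinderEvents (revealed σ n)] fun ω : Config d M =>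
      ∑ v ∈ survivors J (!σ) N ω, f w v := by
  have := measurable_comp_survivors (d := d) (M := M) J
    (m := fun τ => if τ = σ then 0 else N) (D := revealed σ n)
    (fun i hi hσ => by simp_all)
    fun s => ∑ v ∈ s (!σ), f w v
  simpa using this

lemma measure_exists_lt_sum_survivors_le [NeZero M] (R : GrowthRates d M p)
    (hP : IsPairPercolation p P) (hp : ∀ σ, 0 < p σ) (hf : IsWeight f) (hJ : J ≤ N) (σ : Bool)
    (K : ℝ) :
    P {ω | ∃ w ∈ words d M (n + 1), (M : ℝ)⁻¹ ^ (d * (n + 1)) * (K / R.η * R.γ ^ (N - J)) <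
        ∑ v ∈ survivors J (!σ) N ω, f w v} ≤
      ENNReal.ofReal (((M : ℝ) ^ d) ^ (n + 1) * exp (1 - K)) := by
  have hM : (0 : ℝ) < M := by exact_mod_cast NeZero.pos M
  set c : ℝ := (M : ℝ)⁻¹ ^ (d * (n + 1))
  have hc : 0 < c := by positivity
  have htail : ∀ w ∈ words d M (n + 1), P {ω | c * (K / R.η * R.γ ^ (N - J)) <
      ∑ v ∈ survivors J (!σ) N ω, f w v} ≤ ENNReal.ofReal (exp (1 - K)) := by
    intro w hw
    obtain ⟨k, rfl⟩ := Nat.exists_eq_add_of_le hJ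
    rw [Nat.add_sub_cancel_left]
    refine le_trans (measure_mono fun ω hω => ?_)
      (measure_le_sum_survivors_le (J := J) (σ := !σ) hP (hp _).le
        (ψ := fun v => c⁻¹ * f w v) (fun v => by rw [← Finset.mul_sum, hf.additive_right w v])
        (fun v => mul_nonneg (by positivity) (hf.nonneg w v))
        (by positivity : (0 : ℝ) ≤ (M : ℝ)⁻¹ ^ (d - 1))
        (pow_le_one₀ (by positivity) (inv_le_one_of_one_le₀ (by exact_mod_cast NeZero.pos M)))
        R.inv_pow_le_γ (fun v => ?_) R.η_pos R.η_le_one (R.mul_le_γ _) (R.γ_pos hp) k K)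
    · rw [mem_ofPred_eq, ← Finset.mul_sum, ← div_eq_inv_mul, le_div_iff₀' hc]
      exact (mem_ofPred_eq ▸ hω).le
    · rw [← div_eq_inv_mul, div_le_iff₀' hc, ← pow_mul, ← pow_add]
      exact mem_words.1 hw ▸ hf.le_left w v
  calc _ ≤ P (⋃ w ∈ words d M (n + 1), {ω | c * (K / R.η * R.γ ^ (N - J)) <
        ∑ v ∈ survivors J (!σ) N ω, f w v}) := by
        refine measure_mono fun ω hω => ?_
        obtain ⟨w, hw, h⟩ := hω
        exact mem_biUnion hw h
    _ ≤ ∑ w ∈ words d M (n + 1), P {ω | c * (K / R.η * R.γ ^ (N - J)) <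
        ∑ v ∈ survivors J (!σ) N ω, f w v} := measure_biUnion_finset_le _ _
    _ ≤ (words d M (n + 1)).card • ENNReal.ofReal (exp (1 - K)) :=
        Finset.sum_le_card_nsmul _ _ _ htail
    _ = _ := by
        rw [card_words, ENNReal.ofReal_mul (by positivity), nsmul_eq_mul]
        congr
        exact_mod_cast (ENNReal.ofReal_natCast _).symm

lemma measure_pairMass_succ_lt_le [NeZero M] (R : GrowthRates d M p) (hP : IsPairPercolation p P)
    (hp : ∀ σ, 0 < p σ) (hp1 : ∀ σ, p σ ≤ 1) (hf : IsWeight f) (hJ : J ≤ n)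
    (hN : N = n ∨ N = n + 1) (σ : Bool) {a x : ℝ} (ha : 0 < a)
    (hx : (1 - R.δ) * (p false * p true) * a ≤ p σ * x) :
    P {ω | x * R.ρ ^ (n - J) ≤ pairMass f J σ n N ω ∧
        pairMass f J σ (n + 1) N ω < (1 - R.δ) * p σ * pairMass f J σ n N ω} ≤
      ENNReal.ofReal (R.failure a n) := by
  have hM : (0 : ℝ) < M := by exact_mod_cast NeZero.pos M
  have hβ : 0 < R.β := one_pos.trans R.one_lt_β
  have hγ := R.γ_pos hp
  have hη := R.η_pos
  have hρ := R.ρ_pos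
  let ψ (ω : Config d M) (w : List (Alpha d M)) : ℝ := ∑ v ∈ survivors J (!σ) N ω, f w v
  set Y : ℝ := (M : ℝ)⁻¹ ^ (d * (n + 1)) * (R.β ^ n / R.η * R.γ ^ (N - J)) with hY
  have hY0 : 0 < Y := by positivity
  have hψ (w) : Measurable[cylinderEvents (revealed σ n)] fun ω => ψ ω w :=
    measurable_sum_survivors_other σ w
  let A : Set (Config d M) := {ω | x * R.ρ ^ (n - J) ≤ pairMass f J σ n N ω} ∩
    ⋂ w ∈ words d M (n + 1), {ω | ψ ω w ≤ Y}
  have hA : MeasurableSet[cylinderEvents (revealed σ n)] A :=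
    (measurable_sum_survivors hψ measurableSet_Ici).inter
      (Finset.measurableSet_biInter _ fun w _ => hψ w measurableSet_Iic)
  have hdrop := measure_sum_survivors_succ_lt_le hP (hp σ).le hJ hψ
    (fun ω u => by simp only [ψ]; rw [Finset.sum_comm]; simp only [hf.additive_left _ u])
    (fun ω u => Finset.sum_nonneg fun v _ => hf.nonneg u v) R.δ_pos hY0 hA
    (X := x * R.ρ ^ (n - J)) (fun ω hω => hω.1) fun ω hω w hw => mem_iInter₂.1 hω.2 w hw
  have hrate : R.η * R.β ^ n ≤ R.ρ ^ (n - J) / Y := by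
    rw [le_div_iff₀ hY0, hY, pow_mul, inv_pow, inv_pow]
    have := R.γ_pow_mul_le hp hp1 hJ hN
    field_simp
    linarith
  rw [GrowthRates.failure, ENNReal.ofReal_add (by positivity) (by positivity)]
  refine (measure_mono fun ω hω => ?_).trans ((measure_union_le _ _).trans (add_le_add
    (hdrop.trans (ENNReal.ofReal_le_ofReal (exp_le_exp.2 (neg_le_neg ?_))))
    (measure_exists_lt_sum_survivors_le (J := J) (n := n) (N := N) R hP hp hf (by omega) σ
      (R.β ^ n))))
  · by_cases h : ∀ w ∈ words d M (n + 1), ψ ω w ≤ Y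
    · exact Or.inl ⟨⟨hω.1, mem_iInter₂.2 h⟩, hω.2⟩
    · push Not at h
      exact Or.inr h
  · have hz := R.rate_pos hp
    calc _ = R.δ ^ 2 / 2 * (((1 - R.δ) * (p false * p true) * a) * (R.η * R.β ^ n)) := by ring
      _ ≤ R.δ ^ 2 / 2 * ((p σ * x) * (R.ρ ^ (n - J) / Y)) := by
          have : 0 ≤ p σ * x := (mul_pos hz ha).le.trans hx
          gcongr
      _ = _ := by field_simp

lemma measure_pairMass_growth_fails_le [NeZero M] (R : GrowthRates d M p)
    (hP : IsPairPercolation p P) (hp : ∀ σ, 0 < p σ) (hp1 : ∀ σ, p σ ≤ 1) (hf : IsWeight f)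
    (hJ : J ≤ n) {a : ℝ} (ha : 0 < a) :
    P {ω | a * R.ρ ^ (n - J) ≤ pairMass f J false n n ω ∧ pairMass f J false (n + 1) (n + 1) ω <
        (1 - R.δ) ^ 2 * (p false * p true) * pairMass f J false n n ω} ≤
      ENNReal.ofReal (2 * R.failure a n) := by
  have hδ := sub_pos.2 R.δ_lt_one
  have hfirst := measure_pairMass_succ_lt_le R hP hp hp1 hf hJ (Or.inl rfl) false ha
    (x := a) (by
      have : (1 - R.δ) * p true ≤ 1 :=
        mul_le_one₀ (by linarith [R.δ_pos]) (hp _).le (hp1 _)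
      nlinarith [mul_pos (hp false) ha])
  have hsecond := measure_pairMass_succ_lt_le R hP hp hp1 hf.swap hJ (Or.inr rfl) true ha
    (x := (1 - R.δ) * p false * a) (by apply le_of_eq; ring)
  simp only [show true = !false from rfl, pairMass_swap f J false] at hsecond
  rw [two_mul, ENNReal.ofReal_add (R.failure_nonneg _ _) (R.failure_nonneg _ _)]
  refine (measure_mono fun ω hω => ?_).trans
    ((measure_union_le _ _).trans (add_le_add hfirst hsecond))
  obtain ⟨hge, hlt⟩ := hω
  by_cases h : pairMass f J false (n + 1) n ω <
      (1 - R.δ) * p false * pairMass f J false n n ω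
  · exact Or.inl ⟨hge, h⟩
  · refine Or.inr ⟨?_, hlt.trans_le ?_⟩
    · calc _ = (1 - R.δ) * p false * (a * R.ρ ^ (n - J)) := by ring
        _ ≤ (1 - R.δ) * p false * pairMass f J false n n ω := by
            have := hp false
            gcongr
        _ ≤ _ := not_lt.1 h
    · calc _ = (1 - R.δ) * p (!false) * ((1 - R.δ) * p false * pairMass f J false n n ω) := by
            rw [Bool.not_false]; ring
        _ ≤ _ := by
            have := hp (!false)
            gcongr
            exact not_lt.1 h

end PairMass

section Growth

open Filter Topology

lemma summable_pow_mul_exp_neg_mul_pow {c β : ℝ} (hc : 0 < c) (hβ : 1 < β) (C : ℝ) :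
    Summable fun n : ℕ => C ^ n * exp (-(c * β ^ n)) := by
  have hlim : Tendsto (fun n : ℕ => |C| * exp (-(c * (β - 1) * β ^ n))) atTop (𝓝 0) := by
    simpa using (tendsto_exp_neg_atTop_nhds_zero.comp
      ((tendsto_pow_atTop_atTop_of_one_lt hβ).const_mul_atTop
        (mul_pos hc (sub_pos.2 hβ)))).const_mul |C|
  refine summable_of_ratio_norm_eventually_le (r := 1 / 2) (by norm_num) ?_
  filter_upwards [hlim.eventually_le_const (by norm_num : (0 : ℝ) < 1 / 2)] with n hn
  have hsplit : exp (-(c * β ^ (n + 1))) =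
      exp (-(c * (β - 1) * β ^ n)) * exp (-(c * β ^ n)) := by rw [← exp_add]; ring_nf
  simp only [norm_mul, norm_pow, norm_eq_abs, abs_exp, hsplit]
  calc _ = |C| * exp (-(c * (β - 1) * β ^ n)) * (|C| ^ n * exp (-(c * β ^ n))) := by ring
    _ ≤ _ := by gcongr

lemma GrowthRates.summable_mul_failure {p : Bool → ℝ} (R : GrowthRates d M p)
    (hp : ∀ σ, 0 < p σ) {a : ℝ} (ha : 0 < a) (H : ℝ) :
    Summable fun n => (H ^ n + 1) * (2 * R.failure a n) := by
  have hc : 0 < R.δ ^ 2 * R.η * ((1 - R.δ) * (p false * p true) * a) / 2 := by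
    have := R.δ_pos
    have := R.η_pos
    have := R.rate_pos hp
    positivity
  have hdrop := summable_pow_mul_exp_neg_mul_pow hc R.one_lt_β
  have htail := summable_pow_mul_exp_neg_mul_pow one_pos R.one_lt_β
  refine ((((hdrop H).add (hdrop 1)).add
    (((htail (H * (M : ℝ) ^ d)).add (htail ((M : ℝ) ^ d))).mul_left
      ((M : ℝ) ^ d * exp 1))).mul_left 2).congr fun n => ?_
  rw [failure, sub_eq_add_neg _ (R.β ^ n), exp_add 1, one_mul, mul_pow]
  ring

lemma GrowthRates.mesh_error_le {p : Bool → ℝ} (R : GrowthRates d M p) (hp : ∀ σ, 0 < p σ)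
    (hp1 : ∀ σ, p σ ≤ 1) {H ε κ : ℝ} (hH : 0 < H) (hHρ : 2 * ((M : ℝ) ^ d) ^ 2 ≤ R.ρ * H)
    (hε : 0 ≤ ε) {n : ℕ} (J : ℕ) (hκ : ε * ((M : ℝ) ^ d) ^ 2 * (1 / 2) ^ n ≤ κ) :
    ((M : ℝ) ^ d) ^ (n + 1) * ((M : ℝ) ^ d) ^ (n + 1) * (ε / H ^ n) ≤ κ * R.ρ ^ (n - J) := by
  set D : ℝ := (M : ℝ) ^ d
  have hρ := R.ρ_pos
  have hDH : D ^ 2 / H ≤ R.ρ * (1 / 2) := by rw [div_le_iff₀ hH]; linarith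
  calc _ = ε * D ^ 2 * (D ^ 2 / H) ^ n := by rw [div_pow]; ring
    _ ≤ ε * D ^ 2 * (R.ρ * (1 / 2)) ^ n := by gcongr
    _ = ε * D ^ 2 * (1 / 2) ^ n * R.ρ ^ n := by ring
    _ ≤ κ * R.ρ ^ (n - J) :=
        mul_le_mul hκ (pow_le_pow_of_le_one hρ.le (R.ρ_le_one hp hp1) (n.sub_le J))
          (by positivity) ((by positivity : 0 ≤ ε * D ^ 2 * (1 / 2) ^ n).trans hκ)

lemma exists_finset_net {a b : ℝ} (hab : a ≤ b) {N : ℕ} (hN : 0 < N) :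
    ∃ T : Finset ℝ, T.card ≤ N + 1 ∧ (T : Set ℝ) ⊆ Icc a b ∧
      ∀ t ∈ Icc a b, ∃ s ∈ T, |t - s| ≤ (b - a) / N := by
  classical
  have hN0 : (0 : ℝ) < N := by exact_mod_cast hN
  set h := (b - a) / N
  have hh : 0 ≤ h := div_nonneg (sub_nonneg.2 hab) hN0.le
  have hhN : N * h = b - a := mul_div_cancel₀ _ hN0.ne'
  refine ⟨(Finset.range (N + 1)).image fun k : ℕ => a + k * h,
    Finset.card_image_le.trans_eq (Finset.card_range _), ?_, fun t ht => ?_⟩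
  · simp only [Finset.coe_image, Finset.coe_range, image_subset_iff]
    intro k hk
    have hkN : (k : ℝ) ≤ N := by exact_mod_cast Nat.lt_succ_iff.1 hk
    constructor <;> nlinarith
  · obtain hh0 | hh0 := hh.eq_or_lt
    · refine ⟨a, Finset.mem_image.2 ⟨0, by simp, by simp⟩, ?_⟩
      rw [abs_le]; constructor <;> linarith [ht.1, ht.2, hhN ▸ hh0 ▸ mul_zero (N : ℝ)]
    · have hq : 0 ≤ (t - a) / h := div_nonneg (sub_nonneg.2 ht.1) hh
      refine ⟨a + ⌊(t - a) / h⌋₊ * h, Finset.mem_image.2 ⟨_, ?_, rfl⟩, ?_⟩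
      · rw [Finset.mem_range, Nat.lt_succ_iff]
        refine Nat.floor_le_of_le ?_
        rw [div_le_iff₀ hh0, hhN]
        linarith [ht.2]
      · have hlow := (le_div_iff₀ hh0).1 (Nat.floor_le hq)
        have hupp := (div_lt_iff₀ hh0).1 (Nat.lt_floor_add_one ((t - a) / h))
        rw [abs_le]; constructor <;> linarith

lemma abs_pairMass_sub_le {f g : List (Alpha d M) → List (Alpha d M) → ℝ} {ε : ℝ}
    (h : ∀ u v, |f u v - g u v| ≤ ε) (J : ℕ) (σ : Bool) (n m : ℕ) (ω : Config d M) :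
    |pairMass f J σ n m ω - pairMass g J σ n m ω| ≤ ((M : ℝ) ^ d) ^ n * ((M : ℝ) ^ d) ^ m * ε := by
  have hε : 0 ≤ ε := (abs_nonneg _).trans (h [] [])
  have hcard : ∀ σ n, ((survivors J σ n ω).card : ℝ) ≤ ((M : ℝ) ^ d) ^ n := fun σ n => by
    exact_mod_cast card_words d M n ▸ Finset.card_le_card (survivors_subset_words J σ n ω)
  simp only [pairMass, ← Finset.sum_sub_distrib]
  calc _ ≤ ∑ _ ∈ survivors J σ n ω, ∑ _ ∈ survivors J (!σ) m ω, ε :=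
        (Finset.abs_sum_le_sum_abs _ _).trans (Finset.sum_le_sum fun u _ =>
          (Finset.abs_sum_le_sum_abs _ _).trans (Finset.sum_le_sum fun v _ => h u v))
    _ = (survivors J σ n ω).card * (survivors J (!σ) m ω).card * ε := by
        simp only [Finset.sum_const, nsmul_eq_mul, mul_assoc]
    _ ≤ _ := by gcongr <;> exact hcard _ _

/-- A family of weights indexed by `t ∈ I` that is `L`-Lipschitz in `t` and has total mass at
least `a`. -/
structure IsWeightFamily (f : ℝ → List (Alpha d M) → List (Alpha d M) → ℝ) (I : Set ℝ)
    (L a : ℝ) : Prop where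
  isWeight : ∀ t ∈ I, IsWeight (f t)
  lipschitz : ∀ s ∈ I, ∀ t ∈ I, ∀ u v, |f s u v - f t u v| ≤ L * |s - t|
  le_nil : ∀ t ∈ I, a ≤ f t [] []

variable {p : Bool → ℝ} {P : Measure (Config d M)} {L a α β : ℝ} {J : ℕ}
  {f : ℝ → List (Alpha d M) → List (Alpha d M) → ℝ}

lemma IsWeightFamily.le_pairMass (hf : IsWeightFamily f (Icc α β) L a) (R : GrowthRates d M p)
    (hp : ∀ σ, 0 < p σ) (hp1 : ∀ σ, p σ ≤ 1) (hL : 0 ≤ L) (hαβ : α ≤ β) {H : ℝ} (hH : 0 < H)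
    (hHρ : 2 * ((M : ℝ) ^ d) ^ 2 ≤ R.ρ * H) {T : ℕ → Finset ℝ} (hT : ∀ n, (T n : Set ℝ) ⊆ Icc α β)
    (hnet : ∀ n, ∀ t ∈ Icc α β, ∃ s ∈ T n, |t - s| ≤ (β - α) / H ^ n)
    (herr : ∀ n ≥ J, L * (β - α) * ((M : ℝ) ^ d) ^ 2 * (1 / 2) ^ n ≤
      a * ((1 - R.δ) ^ 2 * (p false * p true) - R.ρ)) {ω : Config d M}
    (hgrow : ∀ n ≥ J, ∀ s ∈ T n, a * R.ρ ^ (n - J) ≤ pairMass (f s) J false n n ω →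
      (1 - R.δ) ^ 2 * (p false * p true) * pairMass (f s) J false n n ω ≤
        pairMass (f s) J false (n + 1) (n + 1) ω)
    {n : ℕ} (hn : J ≤ n) {t : ℝ} (ht : t ∈ Icc α β) :
    a * R.ρ ^ (n - J) ≤ pairMass (f t) J false n n ω := by
  set D : ℝ := (M : ℝ) ^ d
  set q : ℝ := (1 - R.δ) ^ 2 * (p false * p true)
  have hρ := R.ρ_pos
  induction n, hn using Nat.le_induction generalizing t with
  | base =>
    simp only [pairMass, survivors_self, Nat.sub_self, pow_zero, mul_one,
      ((hf.isWeight t ht).additive_right _).sum_words,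
      ((hf.isWeight t ht).additive_left _).sum_words]
    exact hf.le_nil t ht
  | succ n hn ih =>
    obtain ⟨s, hs, hts⟩ := hnet n t ht
    have hs' := hT n hs
    have hmesh := R.mesh_error_le hp hp1 hH hHρ
      (mul_nonneg hL (sub_nonneg.2 hαβ)) J (herr n hn)
    have hclose : pairMass (f s) J false (n + 1) (n + 1) ω
        - pairMass (f t) J false (n + 1) (n + 1) ω ≤
          D ^ (n + 1) * D ^ (n + 1) * (L * (β - α) / H ^ n) := by
      refine (le_abs_self _).trans (abs_pairMass_sub_le (fun u v => ?_) J false _ _ ω)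
      refine (hf.lipschitz s hs' t ht u v).trans ?_
      rw [abs_sub_comm, mul_div_assoc]
      gcongr
    have hs_le : q * (a * R.ρ ^ (n - J)) ≤ pairMass (f s) J false (n + 1) (n + 1) ω :=
      (mul_le_mul_of_nonneg_left (ih hs') (hρ.trans R.ρ_lt).le).trans (hgrow n hn s hs (ih hs'))
    rw [Nat.succ_sub hn, pow_succ]
    linarith

lemma measure_exists_growth_fails_le [NeZero M] (R : GrowthRates d M p)
    (hP : IsPairPercolation p P) (hp : ∀ σ, 0 < p σ) (hp1 : ∀ σ, p σ ≤ 1) (ha : 0 < a) {H : ℕ}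
    {T : ℕ → Finset ℝ} (hcard : ∀ n, (T n).card ≤ H ^ n + 1)
    (hf : ∀ n, ∀ t ∈ T n, IsWeight (f t)) :
    P {ω | ∃ n ≥ J, ∃ s ∈ T n, a * R.ρ ^ (n - J) ≤ pairMass (f s) J false n n ω ∧
        pairMass (f s) J false (n + 1) (n + 1) ω <
          (1 - R.δ) ^ 2 * (p false * p true) * pairMass (f s) J false n n ω} ≤
      ENNReal.ofReal (∑' n, ((H : ℝ) ^ (n + J) + 1) * (2 * R.failure a (n + J))) := by
  let bad (n : ℕ) (s : ℝ) : Set (Config d M) :=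
    {ω | a * R.ρ ^ (n - J) ≤ pairMass (f s) J false n n ω ∧
      pairMass (f s) J false (n + 1) (n + 1) ω <
        (1 - R.δ) ^ 2 * (p false * p true) * pairMass (f s) J false n n ω}
  have hlevel : ∀ n ≥ J, P (⋃ s ∈ T n, bad n s) ≤
      ENNReal.ofReal (((H : ℝ) ^ n + 1) * (2 * R.failure a n)) := by
    intro n hn
    calc P (⋃ s ∈ T n, bad n s) ≤ ∑ s ∈ T n, P (bad n s) := measure_biUnion_finset_le _ _
      _ ≤ (T n).card • ENNReal.ofReal (2 * R.failure a n) := Finset.sum_le_card_nsmul _ _ _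
          fun s hs => measure_pairMass_growth_fails_le R hP hp hp1 (hf n s hs) hn ha
      _ ≤ (H ^ n + 1) • ENNReal.ofReal (2 * R.failure a n) := by gcongr; exact hcard n
      _ = _ := by
          rw [show (H : ℝ) ^ n + 1 = (H ^ n + 1 : ℕ) by push_cast; rfl,
            ENNReal.ofReal_mul (Nat.cast_nonneg _), ENNReal.ofReal_natCast, nsmul_eq_mul]
  calc _ ≤ P (⋃ n, ⋃ s ∈ T (n + J), bad (n + J) s) := by
        refine measure_mono fun ω hω => ?_
        obtain ⟨n, hn, s, hs, h⟩ := hω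
        obtain ⟨k, rfl⟩ := Nat.exists_eq_add_of_le' hn
        exact mem_iUnion.2 ⟨k, mem_biUnion hs h⟩
    _ ≤ ∑' n, P (⋃ s ∈ T (n + J), bad (n + J) s) := measure_iUnion_le _
    _ ≤ ∑' n, ENNReal.ofReal (((H : ℝ) ^ (n + J) + 1) * (2 * R.failure a (n + J))) :=
        ENNReal.tsum_le_tsum fun n => hlevel _ (J.le_add_left n)
    _ = _ := (ENNReal.ofReal_tsum_of_nonneg
        (fun n => mul_nonneg (by positivity) (mul_nonneg zero_le_two (R.failure_nonneg _ _)))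
        ((summable_nat_add_iff J).2 (R.summable_mul_failure hp ha H))).symm

/-- The level depends on the family only through its parameters. -/
lemma exists_level_half_le_measure [NeZero M] (R : GrowthRates d M p)
    (hP : IsPairPercolation p P) (hp : ∀ σ, 0 < p σ) (hp1 : ∀ σ, p σ ≤ 1) (hL : 0 ≤ L)
    (ha : 0 < a) (hαβ : α ≤ β) :
    ∃ J, ∀ f, IsWeightFamily f (Icc α β) L a →
      2⁻¹ ≤ P {ω | ∀ n ≥ J, ∀ t ∈ Icc α β, 0 < pairMass (f t) J false n n ω} := by
  have := hP.isProbabilityMeasure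
  have hρ := R.ρ_pos
  obtain ⟨H, hH⟩ := exists_nat_gt (2 * ((M : ℝ) ^ d) ^ 2 / R.ρ)
  have hH0 : (0 : ℝ) < H := (by positivity : 0 ≤ 2 * ((M : ℝ) ^ d) ^ 2 / R.ρ).trans_lt hH
  have hHρ : 2 * ((M : ℝ) ^ d) ^ 2 ≤ R.ρ * H := ((div_lt_iff₀' hρ).1 hH).le
  choose T hcard hT hnet using fun n : ℕ => exists_finset_net hαβ (pow_pos (Nat.cast_pos.1 hH0) n)
  simp only [Nat.cast_pow] at hnet
  have hmesh : Tendsto (fun n : ℕ => L * (β - α) * ((M : ℝ) ^ d) ^ 2 * (1 / 2) ^ n)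
      atTop (𝓝 0) := by
    simpa using (tendsto_pow_atTop_nhds_zero_of_lt_one (by norm_num : (0 : ℝ) ≤ 1 / 2)
      (by norm_num)).const_mul (L * (β - α) * ((M : ℝ) ^ d) ^ 2)
  obtain ⟨J, herr, htail⟩ := ((eventually_forall_ge_atTop.2 (hmesh.eventually_le_const
    (mul_pos ha (sub_pos.2 R.ρ_lt)))).and ((_root_.tendsto_sum_nat_add fun n =>
      ((H : ℝ) ^ n + 1) * (2 * R.failure a n)).eventually_le_const
        (by norm_num : (0 : ℝ) < 2⁻¹))).exists
  refine ⟨J, fun f hf => ?_⟩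
  have hfail := measure_exists_growth_fails_le (J := J) R hP hp hp1 ha hcard
    fun n t ht => hf.isWeight t (hT n ht)
  have hcompl : P {ω | ∀ n ≥ J, ∀ t ∈ Icc α β, 0 < pairMass (f t) J false n n ω}ᶜ ≤ 2⁻¹ := by
    refine (measure_mono fun ω hω => ?_).trans (hfail.trans
      ((ENNReal.ofReal_le_ofReal htail).trans_eq (by rw [ENNReal.ofReal_inv_of_pos two_pos]; simp)))
    contrapose! hω
    simp only [mem_ofPred_eq, not_exists, not_and, not_lt] at hω
    refine not_not.2 fun n hn t ht => (by positivity : 0 < a * R.ρ ^ (n - J)).trans_le ?_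
    exact hf.le_pairMass R hp hp1 hL hαβ hH0 hHρ hT hnet herr
      (fun n hn s hs => hω n hn s hs) hn ht
  have hsum := measure_univ_le_add_compl (μ := P)
    {ω | ∀ n ≥ J, ∀ t ∈ Icc α β, 0 < pairMass (f t) J false n n ω}
  rw [measure_univ, ← ENNReal.inv_two_add_inv_two] at hsum
  exact (ENNReal.add_le_add_iff_right (by simp)).1 (hsum.trans (by gcongr))

end Growth

section Cubes

lemma wordBase_nil (i : Fin d) : wordBase d M [] i = 0 := by simp [wordBase]

lemma wordBase_cons (a : Alpha d M) (w : List (Alpha d M)) (i : Fin d) :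
    wordBase d M (a :: w) i = (a i : ℝ) * (M : ℝ)⁻¹ + (M : ℝ)⁻¹ * wordBase d M w i := by
  have hM : (M : ℝ) ≠ 0 := by exact_mod_cast (a i).pos.ne'
  have tail (j : Fin w.length) :
      ((a :: w).get j.succ i : ℝ) * (M : ℝ) ^ (-((j.succ : ℕ) : ℤ) - 1)
        = (M : ℝ)⁻¹ * ((w.get j i : ℝ) * (M : ℝ) ^ (-((j : ℕ) : ℤ) - 1)) := by
    rw [mul_left_comm, ← zpow_neg_one (M : ℝ), ← zpow_add₀ hM, List.get_cons_succ', Fin.val_succ]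
    congr 2
    push_cast
    ring
  calc wordBase d M (a :: w) i
      = ((a :: w).get 0 i : ℝ) * (M : ℝ) ^ (-((0 : ℕ) : ℤ) - 1)
        + ∑ j : Fin w.length,
            ((a :: w).get j.succ i : ℝ) * (M : ℝ) ^ (-((j.succ : ℕ) : ℤ) - 1) :=
        Fin.sum_univ_succ _
    _ = _ := by
        rw [Finset.sum_congr rfl fun j _ => tail j, ← Finset.mul_sum, Nat.cast_zero, neg_zero,
          zero_sub, zpow_neg_one]
        rfl

lemma wordBase_append (u w : List (Alpha d M)) (i : Fin d) :
    wordBase d M (u ++ w) i = wordBase d M u i + (M : ℝ)⁻¹ ^ u.length * wordBase d M w i := by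
  induction u with
  | nil => simp [wordBase_nil]
  | cons a u ih =>
    rw [List.cons_append, wordBase_cons, wordBase_cons, ih, List.length_cons, pow_succ]
    ring

lemma wordBase_concat (w : List (Alpha d M)) (a : Alpha d M) (i : Fin d) :
    wordBase d M (w ++ [a]) i = wordBase d M w i + (a i : ℝ) * (M : ℝ)⁻¹ ^ (w.length + 1) := by
  rw [wordBase_append, wordBase_cons, wordBase_nil, pow_succ]
  ring

lemma mem_wordCube {w : List (Alpha d M)} {x : EuclideanSpace ℝ (Fin d)} :
    x ∈ wordCube d M w ↔
      ∀ i, x i ∈ Icc (wordBase d M w i) (wordBase d M w i + (M : ℝ)⁻¹ ^ w.length) := by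
  simp only [wordCube, mem_ofPred_eq, mem_Icc, zpow_neg, zpow_natCast, inv_pow]

/-- The half-open `M`-adic cube of the word `w`. Unlike the closed cubes, those of one level are
pairwise disjoint, which makes the contact weights below additive. -/
def halfOpenCube (w : List (Alpha d M)) : Set (Fin d → ℝ) :=
  univ.pi fun l => Ico (wordBase d M w l) (wordBase d M w l + (M : ℝ)⁻¹ ^ w.length)

lemma halfOpenCube_nil : halfOpenCube ([] : List (Alpha d M)) = univ.pi fun _ => Ico 0 1 := by
  simp [halfOpenCube, wordBase_nil]

lemma toLp_mem_wordCube {w : List (Alpha d M)} {x : Fin d → ℝ} (hx : x ∈ halfOpenCube w) :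
    WithLp.toLp 2 x ∈ wordCube d M w :=
  mem_wordCube.2 fun l => Ico_subset_Icc_self (hx l (mem_univ l))

lemma iUnion_fin_Ico_add_mul (b : ℝ) {η : ℝ} (hη : 0 < η) :
    ⋃ k : Fin M, Ico (b + k * η) (b + (k + 1) * η) = Ico b (b + M * η) := by
  ext x
  simp only [mem_iUnion, mem_Ico]
  constructor
  · rintro ⟨k, hk⟩
    have hkM : (k : ℝ) + 1 ≤ M := by exact_mod_cast k.2
    have hk0 : (0 : ℝ) ≤ (k : ℕ) := Nat.cast_nonneg _
    constructor <;> nlinarith [hk0]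
  · rintro ⟨hb, hM⟩
    have h0 : 0 ≤ (x - b) / η := div_nonneg (by linarith) hη.le
    have hlt : ⌊(x - b) / η⌋₊ < M := by
      rw [Nat.floor_lt h0, div_lt_iff₀ hη]
      linarith
    have hfloor := (le_div_iff₀ hη).1 (Nat.floor_le h0)
    have hceil := (div_lt_iff₀ hη).1 (Nat.lt_floor_add_one ((x - b) / η))
    exact ⟨⟨_, hlt⟩, by linarith, by linarith⟩

lemma halfOpenCube_concat (w : List (Alpha d M)) (a : Alpha d M) :
    halfOpenCube (w ++ [a]) = univ.pi fun l =>
      Ico (wordBase d M w l + (a l : ℕ) * (M : ℝ)⁻¹ ^ (w.length + 1))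
        (wordBase d M w l + ((a l : ℕ) + 1) * (M : ℝ)⁻¹ ^ (w.length + 1)) := by
  simp only [halfOpenCube, wordBase_concat, List.length_append, List.length_singleton, add_one_mul,
    add_assoc]

variable [NeZero M]

lemma inv_natCast_pos : 0 < (M : ℝ)⁻¹ := inv_pos.2 (by exact_mod_cast NeZero.pos M)

lemma iUnion_halfOpenCube_concat (w : List (Alpha d M)) :
    ⋃ a, halfOpenCube (w ++ [a]) = halfOpenCube w := by
  have hpos : 0 < (M : ℝ)⁻¹ ^ (w.length + 1) := pow_pos inv_natCast_pos _
  have hmul : (M : ℝ)⁻¹ ^ w.length = M * (M : ℝ)⁻¹ ^ (w.length + 1) := by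
    rw [pow_succ', mul_inv_cancel_left₀ (NeZero.ne (M : ℝ))]
  simp only [halfOpenCube_concat]
  rw [iUnion_univ_pi fun (l : Fin d) (k : Fin M) =>
      Ico (wordBase d M w l + (k : ℕ) * (M : ℝ)⁻¹ ^ (w.length + 1))
        (wordBase d M w l + ((k : ℕ) + 1) * (M : ℝ)⁻¹ ^ (w.length + 1))]
  simp only [iUnion_fin_Ico_add_mul _ hpos, halfOpenCube, ← hmul]

lemma pairwise_disjoint_halfOpenCube_concat (w : List (Alpha d M)) :
    Pairwise (Function.onFun Disjoint fun a => halfOpenCube (w ++ [a])) := by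
  intro a b hab
  obtain ⟨l, hl⟩ := Function.ne_iff.1 hab
  have hmono : Monotone fun k : ℕ => wordBase d M w l + k * (M : ℝ)⁻¹ ^ (w.length + 1) := by
    have := inv_natCast_pos (M := M)
    intro j k hjk
    dsimp only
    gcongr
  have hdisj := hmono.pairwise_disjoint_on_Ico_succ fun h => hl (Fin.ext h)
  simp only [Function.onFun, Nat.succ_eq_succ, Nat.succ_eq_add_one, Nat.cast_add_one] at hdisj
  simp only [Function.onFun, halfOpenCube_concat]
  exact disjoint_univ_pi.2 ⟨l, hdisj⟩

lemma halfOpenCube_subset (w : List (Alpha d M)) :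
    halfOpenCube w ⊆ univ.pi fun _ => Ico (0 : ℝ) 1 := by
  induction w using List.reverseRecOn with
  | nil => exact halfOpenCube_nil.subset
  | append_singleton w a ih =>
    rw [← iUnion_halfOpenCube_concat w] at ih
    exact (subset_iUnion _ a).trans ih

end Cubes

section ContactWeight

/-- The triples `(t, x, y)` such that replacing the `i`-th coordinates of `x` and `y` by
`t + g (x, y)` and `t` gives a point of `A` and a point of `B`. The `i`-th coordinates of `x` and
`y` are dummy variables in `[0, 1)`, so that the volume of this region is the `(2d-1)`-dimensional
volume of the part of `A × B` inside the hypersurface `xᵢ = yᵢ + g (x, y)`, for `g` independent of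
the `i`-th coordinates. -/
def contactRegion (i : Fin d) (g : (Fin d → ℝ) × (Fin d → ℝ) → ℝ) (A B : Set (Fin d → ℝ)) :
    Set (ℝ × (Fin d → ℝ) × (Fin d → ℝ)) :=
  {z | z.2.1 i ∈ Ico 0 1 ∧ z.2.2 i ∈ Ico 0 1 ∧
    Function.update z.2.1 i (z.1 + g z.2) ∈ A ∧ Function.update z.2.2 i z.1 ∈ B}

/-- The weight of a pair of cubes: the volume of its contact region. -/
def contactWeight (i : Fin d) (g : (Fin d → ℝ) × (Fin d → ℝ) → ℝ) (u v : List (Alpha d M)) : ℝ :=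
  volume.real (contactRegion i g (halfOpenCube u) (halfOpenCube v))

/-- The half-open cube of `w` with its `i`-th side replaced by `[0, 1)`. -/
def sideBox (i : Fin d) (w : List (Alpha d M)) : Set (Fin d → ℝ) :=
  univ.pi fun l => if l = i then Ico 0 1 else
    Ico (wordBase d M w l) (wordBase d M w l + (M : ℝ)⁻¹ ^ w.length)

variable {i : Fin d} {g g' : (Fin d → ℝ) × (Fin d → ℝ) → ℝ} {u v w : List (Alpha d M)}

lemma measurableSet_sideBox : MeasurableSet (sideBox i w) :=
  MeasurableSet.univ_pi fun l => by split_ifs <;> exact measurableSet_Ico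

lemma volume_sideBox :
    volume (sideBox i w) = ENNReal.ofReal ((M : ℝ)⁻¹ ^ ((d - 1) * w.length)) := by
  simp only [sideBox, volume_pi_pi, apply_ite (volume : Set ℝ → ℝ≥0∞), Real.volume_Ico, sub_zero,
    ENNReal.ofReal_one, add_sub_cancel_left]
  rw [Finset.prod_ite, Finset.prod_const_one, one_mul, Finset.prod_const, Finset.filter_ne',
    Finset.card_erase_of_mem (Finset.mem_univ _), Finset.card_univ, Fintype.card_fin,
    ← ENNReal.ofReal_pow (by positivity), ← pow_mul, mul_comm]

lemma update_mem_halfOpenCube_iff {x : Fin d → ℝ} {t : ℝ} :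
    x i ∈ Ico (0 : ℝ) 1 ∧ Function.update x i t ∈ halfOpenCube w ↔
      x ∈ sideBox i w ∧ t ∈ Ico (wordBase d M w i) (wordBase d M w i + (M : ℝ)⁻¹ ^ w.length) := by
  simp only [halfOpenCube, sideBox, mem_univ_pi]
  constructor
  · rintro ⟨hi, h⟩
    refine ⟨fun l => ?_, by simpa using h i⟩
    split_ifs with hl
    · exact hl ▸ hi
    · simpa [hl] using h l
  · rintro ⟨h, ht⟩
    refine ⟨by simpa using h i, fun l => ?_⟩
    rcases eq_or_ne l i with rfl | hl
    · simpa using ht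
    · simpa [hl] using h l

lemma mem_contactRegion_iff {z : ℝ × (Fin d → ℝ) × (Fin d → ℝ)} :
    z ∈ contactRegion i g (halfOpenCube u) (halfOpenCube v) ↔
      z.2 ∈ sideBox i u ×ˢ sideBox i v ∧
      z.1 + g z.2 ∈ Ico (wordBase d M u i) (wordBase d M u i + (M : ℝ)⁻¹ ^ u.length) ∧
      z.1 ∈ Ico (wordBase d M v i) (wordBase d M v i + (M : ℝ)⁻¹ ^ v.length) := by
  have hu := update_mem_halfOpenCube_iff (i := i) (w := u) (x := z.2.1) (t := z.1 + g z.2)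
  have hv := update_mem_halfOpenCube_iff (i := i) (w := v) (x := z.2.2) (t := z.1)
  rw [contactRegion, mem_ofPred_eq, mem_prod]
  tauto

lemma measurableSet_contactRegion (hg : Measurable g) :
    MeasurableSet (contactRegion i g (halfOpenCube u) (halfOpenCube v)) := by
  have hsplit : contactRegion i g (halfOpenCube u) (halfOpenCube v) =
      Prod.snd ⁻¹' (sideBox i u ×ˢ sideBox i v) ∩
        ((fun z => z.1 + g z.2) ⁻¹'
            Ico (wordBase d M u i) (wordBase d M u i + (M : ℝ)⁻¹ ^ u.length) ∩
          Prod.fst ⁻¹' Ico (wordBase d M v i) (wordBase d M v i + (M : ℝ)⁻¹ ^ v.length)) :=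
    Set.ext fun z => mem_contactRegion_iff
  rw [hsplit]
  exact (measurable_snd (measurableSet_sideBox.prod measurableSet_sideBox)).inter
    (((measurable_fst.add (hg.comp measurable_snd)) measurableSet_Ico).inter
      (measurable_fst measurableSet_Ico))

lemma prod_le_mul_of_slices {α β : Type*} [MeasurableSpace α] [MeasurableSpace β] {μ : Measure α}
    {ν : Measure β} [SFinite μ] [SFinite ν] {A : Set (α × β)} {S : Set β} {c : ℝ≥0∞}
    (hA : MeasurableSet A) (hS : MeasurableSet S) (hAS : ∀ z ∈ A, z.2 ∈ S)
    (hc : ∀ b, μ {a | (a, b) ∈ A} ≤ c) : μ.prod ν A ≤ c * ν S := by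
  rw [Measure.prod_apply_symm hA, ← lintegral_indicator_const hS]
  refine lintegral_mono fun b => ?_
  by_cases hb : b ∈ S
  · rw [indicator_of_mem hb]
    exact hc b
  · have hempty : (fun a => (a, b)) ⁻¹' A = ∅ := eq_empty_of_forall_notMem fun a ha => hb (hAS _ ha)
    simp only [hempty, measure_empty, zero_le]

lemma volume_contactRegion_le (hg : Measurable g) (u v : List (Alpha d M)) :
    volume (contactRegion i g (halfOpenCube u) (halfOpenCube v)) ≤
      ENNReal.ofReal ((M : ℝ)⁻¹ ^ (max u.length v.length + (d - 1) * (u.length + v.length))) := by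
  have hslice (z : (Fin d → ℝ) × (Fin d → ℝ)) :
      volume {t | (t, z) ∈ contactRegion i g (halfOpenCube u) (halfOpenCube v)} ≤
        ENNReal.ofReal ((M : ℝ)⁻¹ ^ max u.length v.length) := by
    rcases max_choice u.length v.length with h | h <;> rw [h]
    · calc _ ≤ volume ((fun t => t + g z) ⁻¹'
              Ico (wordBase d M u i) (wordBase d M u i + (M : ℝ)⁻¹ ^ u.length)) :=
            measure_mono fun t ht => (mem_contactRegion_iff.1 ht).2.1
        _ = _ := by rw [measure_preimage_add_right, Real.volume_Ico, add_sub_cancel_left]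
    · calc _ ≤ volume (Ico (wordBase d M v i) (wordBase d M v i + (M : ℝ)⁻¹ ^ v.length)) :=
            measure_mono fun t ht => (mem_contactRegion_iff.1 ht).2.2
        _ = _ := by rw [Real.volume_Ico, add_sub_cancel_left]
  refine (prod_le_mul_of_slices (measurableSet_contactRegion hg)
    (measurableSet_sideBox.prod measurableSet_sideBox)
    (fun z hz => (mem_contactRegion_iff.1 hz).1) hslice).trans_eq ?_
  rw [Measure.volume_eq_prod, Measure.prod_prod, volume_sideBox, volume_sideBox,
    ← ENNReal.ofReal_mul (by positivity), ← ENNReal.ofReal_mul (by positivity), ← pow_add,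
    ← pow_add, mul_add]

lemma volume_contactRegion_ne_top (hg : Measurable g) (u v : List (Alpha d M)) :
    volume (contactRegion i g (halfOpenCube u) (halfOpenCube v)) ≠ ∞ :=
  ((volume_contactRegion_le hg u v).trans_lt ENNReal.ofReal_lt_top).ne

lemma contactWeight_le (hg : Measurable g) (u v : List (Alpha d M)) :
    contactWeight i g u v ≤
      (M : ℝ)⁻¹ ^ (max u.length v.length + (d - 1) * (u.length + v.length)) :=
  ENNReal.toReal_le_of_le_ofReal (by positivity) (volume_contactRegion_le hg u v)

variable [NeZero M]

lemma inv_natCast_le_one : (M : ℝ)⁻¹ ≤ 1 := inv_le_one_of_one_le₀ (by exact_mod_cast NeZero.pos M)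

lemma isAdditive_contactWeight_left (hg : Measurable g) (v : List (Alpha d M)) :
    IsAdditive fun u => contactWeight i g u v := fun u => by
  have hsplit : contactRegion i g (halfOpenCube u) (halfOpenCube v)
      = ⋃ a, contactRegion i g (halfOpenCube (u ++ [a])) (halfOpenCube v) := by
    ext z
    simp only [contactRegion, ← iUnion_halfOpenCube_concat u, mem_iUnion, mem_ofPred_eq]
    tauto
  have hdisj : Pairwise (Function.onFun Disjoint fun a =>
      contactRegion i g (halfOpenCube (u ++ [a])) (halfOpenCube v)) := fun a b hab =>
    disjoint_left.2 fun z hza hzb =>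
      disjoint_left.1 (pairwise_disjoint_halfOpenCube_concat u hab) hza.2.2.1 hzb.2.2.1
  simp only [contactWeight]
  rw [hsplit, measureReal_iUnion_fintype hdisj (fun _ => measurableSet_contactRegion hg)
    fun _ => volume_contactRegion_ne_top hg _ _]

lemma isAdditive_contactWeight_right (hg : Measurable g) (u : List (Alpha d M)) :
    IsAdditive (contactWeight i g u) := fun v => by
  have hsplit : contactRegion i g (halfOpenCube u) (halfOpenCube v)
      = ⋃ a, contactRegion i g (halfOpenCube u) (halfOpenCube (v ++ [a])) := by
    ext z
    simp only [contactRegion, ← iUnion_halfOpenCube_concat v, mem_iUnion, mem_ofPred_eq]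
    tauto
  have hdisj : Pairwise (Function.onFun Disjoint fun a =>
      contactRegion i g (halfOpenCube u) (halfOpenCube (v ++ [a]))) := fun a b hab =>
    disjoint_left.2 fun z hza hzb =>
      disjoint_left.1 (pairwise_disjoint_halfOpenCube_concat v hab) hza.2.2.2 hzb.2.2.2
  simp only [contactWeight]
  rw [hsplit, measureReal_iUnion_fintype hdisj (fun _ => measurableSet_contactRegion hg)
    fun _ => volume_contactRegion_ne_top hg _ _]

lemma isWeight_contactWeight (hg : Measurable g) :
    IsWeight (contactWeight (M := M) i g) where
  nonneg _ _ := measureReal_nonneg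
  additive_left := isAdditive_contactWeight_left hg
  additive_right := isAdditive_contactWeight_right hg
  le_left u v := by
    refine (contactWeight_le hg u v).trans
      (pow_le_pow_of_le_one inv_natCast_pos.le inv_natCast_le_one ?_)
    obtain ⟨k, rfl⟩ := Nat.exists_eq_add_of_le' i.pos
    have := le_max_left u.length v.length
    rw [Nat.add_sub_cancel]
    linarith
  le_right u v := by
    refine (contactWeight_le hg u v).trans
      (pow_le_pow_of_le_one inv_natCast_pos.le inv_natCast_le_one ?_)
    obtain ⟨k, rfl⟩ := Nat.exists_eq_add_of_le' i.pos
    have := le_max_right u.length v.length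
    rw [Nat.add_sub_cancel]
    linarith

lemma volume_contactRegion_sdiff_le (hg : Measurable g) (hg' : Measurable g') {ε : ℝ}
    (hε : ∀ z, |g z - g' z| ≤ ε) (u v : List (Alpha d M)) :
    volume (contactRegion i g (halfOpenCube u) (halfOpenCube v) \
      contactRegion i g' (halfOpenCube u) (halfOpenCube v)) ≤ ENNReal.ofReal (2 * ε) := by
  have hε0 : 0 ≤ ε := (abs_nonneg _).trans (hε 0)
  have hside (w : List (Alpha d M)) : volume (sideBox i w) ≤ 1 := by
    rw [volume_sideBox]
    exact ENNReal.ofReal_le_one.2 (pow_le_one₀ inv_natCast_pos.le inv_natCast_le_one)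
  set b := wordBase d M u i
  set c := b + (M : ℝ)⁻¹ ^ u.length
  have hslice (z : (Fin d → ℝ) × (Fin d → ℝ)) :
      volume {t | (t, z) ∈ contactRegion i g (halfOpenCube u) (halfOpenCube v) \
        contactRegion i g' (halfOpenCube u) (halfOpenCube v)} ≤ ENNReal.ofReal (2 * ε) := by
    have hz := abs_le.1 (hε z)
    calc _ ≤ volume (Ico (b - g z) (b - g' z) ∪ Ico (c - g' z) (c - g z)) := by
          refine measure_mono fun t ht => ?_
          simp only [mem_ofPred_eq, mem_sdiff, mem_contactRegion_iff] at ht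
          obtain ⟨⟨hsides, ⟨hb, hc⟩, hv⟩, hnot⟩ := ht
          by_cases hb' : b ≤ t + g' z
          · have hc' : c ≤ t + g' z := not_lt.1 fun hc' => hnot ⟨hsides, ⟨hb', hc'⟩, hv⟩
            exact Or.inr ⟨by linarith, by linarith⟩
          · exact Or.inl ⟨by linarith, by linarith⟩
      _ ≤ ENNReal.ofReal ε + ENNReal.ofReal ε := by
          refine (measure_union_le _ _).trans ?_
          rw [Real.volume_Ico, Real.volume_Ico]
          gcongr <;> linarith
      _ = _ := by rw [two_mul, ENNReal.ofReal_add hε0 hε0]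
  calc _ ≤ ENNReal.ofReal (2 * ε) * volume (sideBox i u ×ˢ sideBox i v) :=
        prod_le_mul_of_slices
          ((measurableSet_contactRegion hg).diff (measurableSet_contactRegion hg'))
          (measurableSet_sideBox.prod measurableSet_sideBox)
          (fun z hz => (mem_contactRegion_iff.1 hz.1).1) hslice
    _ ≤ ENNReal.ofReal (2 * ε) * (1 * 1) := by
        rw [Measure.volume_eq_prod, Measure.prod_prod]
        gcongr <;> exact hside _
    _ = _ := by rw [one_mul, mul_one]

lemma contactWeight_sub_le (hg : Measurable g) (hg' : Measurable g') {ε : ℝ}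
    (hε : ∀ z, |g z - g' z| ≤ ε) (u v : List (Alpha d M)) :
    contactWeight i g u v - contactWeight i g' u v ≤ 2 * ε :=
  (le_measureReal_sdiff (volume_contactRegion_ne_top hg' u v)).trans
    (ENNReal.toReal_le_of_le_ofReal (by linarith [(abs_nonneg _).trans (hε 0)])
      (volume_contactRegion_sdiff_le hg hg' hε u v))

lemma abs_contactWeight_sub_le (hg : Measurable g) (hg' : Measurable g') {ε : ℝ}
    (hε : ∀ z, |g z - g' z| ≤ ε) (u v : List (Alpha d M)) :
    |contactWeight i g u v - contactWeight i g' u v| ≤ 2 * ε :=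
  abs_sub_le_iff.2 ⟨contactWeight_sub_le hg hg' hε u v,
    contactWeight_sub_le hg' hg (fun z => (abs_sub_comm _ _).trans_le (hε z)) u v⟩

end ContactWeight

section Contact

/-- Translating the first of two closed cubes by `Δ`, some points of the two are at distance `r`. -/
def Touch (Δ : EuclideanSpace ℝ (Fin d)) (r : ℝ) (u v : List (Alpha d M)) : Prop :=
  ∃ x ∈ wordCube d M u, ∃ y ∈ wordCube d M v, ‖Δ + (x - y)‖ = r

/-- The squared length of `Δ + x - y` transverse to the `i`-th axis. -/
def transverseSq (i : Fin d) (Δ : EuclideanSpace ℝ (Fin d)) (z : (Fin d → ℝ) × (Fin d → ℝ)) : ℝ :=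
  ∑ l ∈ Finset.univ.erase i, (Δ l + z.1 l - z.2 l) ^ 2

/-- The size of the `i`-th coordinate of `Δ + x - y` for which this vector has length `r`, cut off
below at `|Δ i| / 2` to make it a Lipschitz function of `r`. -/
def contactHeight (i : Fin d) (Δ : EuclideanSpace ℝ (Fin d)) (r : ℝ)
    (z : (Fin d → ℝ) × (Fin d → ℝ)) : ℝ :=
  √(max (r ^ 2 - transverseSq i Δ z) ((|Δ i| / 2) ^ 2))

/-- The value of `xᵢ - yᵢ` for which `Δ + x - y` has length `r`, as a function of the other
coordinates of `x` and `y`, as long as the cutoff in `contactHeight` is not active. -/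
def contactShift (i : Fin d) (Δ : EuclideanSpace ℝ (Fin d)) (r : ℝ)
    (z : (Fin d → ℝ) × (Fin d → ℝ)) : ℝ :=
  SignType.sign (Δ i) * (contactHeight i Δ r z - |Δ i|)

variable {i : Fin d} {Δ : EuclideanSpace ℝ (Fin d)} {r r' : ℝ} {z : (Fin d → ℝ) × (Fin d → ℝ)}

lemma contactHeight_sq :
    contactHeight i Δ r z ^ 2 = max (r ^ 2 - transverseSq i Δ z) ((|Δ i| / 2) ^ 2) :=
  Real.sq_sqrt (le_max_of_le_right (sq_nonneg _))

lemma half_abs_le_contactHeight : |Δ i| / 2 ≤ contactHeight i Δ r z :=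
  Real.le_sqrt_of_sq_le (le_max_right _ _)

lemma contactHeight_nonneg : 0 ≤ contactHeight i Δ r z := Real.sqrt_nonneg _

lemma measurable_contactShift : Measurable (contactShift i Δ r) := by
  unfold contactShift contactHeight transverseSq
  fun_prop

lemma abs_sign_mul (hΔ : Δ i ≠ 0) (t : ℝ) : |(SignType.sign (Δ i) : ℝ) * t| = |t| := by
  rcases hΔ.lt_or_gt with h | h <;> simp [h]

lemma abs_contactShift_sub_le (hΔ : 0 < |Δ i|) (hr : r ∈ Icc 0 (2 * d * |Δ i|))
    (hr' : r' ∈ Icc 0 (2 * d * |Δ i|)) :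
    |contactShift i Δ r z - contactShift i Δ r' z| ≤ 4 * d * |r - r'| := by
  set h := contactHeight i Δ r z
  set h' := contactHeight i Δ r' z
  have hh : |Δ i| / 2 ≤ h := half_abs_le_contactHeight
  have hh' : |Δ i| / 2 ≤ h' := half_abs_le_contactHeight
  have hshift : |contactShift i Δ r z - contactShift i Δ r' z| = |h - h'| := by
    rw [contactShift, contactShift, ← mul_sub, abs_sign_mul (abs_pos.1 hΔ),
      sub_sub_sub_cancel_right]
  have hsq : |h - h'| * (h + h') ≤ |r - r'| * (r + r') := by
    calc |h - h'| * (h + h') = |h ^ 2 - h' ^ 2| := by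
          rw [sq_sub_sq, abs_mul, mul_comm, abs_of_nonneg (by linarith : 0 ≤ h + h')]
      _ ≤ |r ^ 2 - r' ^ 2| := by
          rw [contactHeight_sq, contactHeight_sq]
          refine (abs_max_sub_max_le_abs _ _ _).trans_eq ?_
          rw [sub_sub_sub_cancel_right]
      _ = |r - r'| * (r + r') := by
          rw [sq_sub_sq, abs_mul, mul_comm, abs_of_nonneg (add_nonneg hr.1 hr'.1)]
  rw [hshift]
  refine le_of_mul_le_mul_right ?_ hΔ
  calc |h - h'| * |Δ i| ≤ |h - h'| * (h + h') := by gcongr; linarith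
    _ ≤ |r - r'| * (2 * d * |Δ i| + 2 * d * |Δ i|) :=
        hsq.trans (by gcongr; exacts [hr.2, hr'.2])
    _ = 4 * d * |r - r'| * |Δ i| := by ring

lemma norm_sq_add_update_sub_update (x y : Fin d → ℝ) (a b : ℝ) :
    ‖Δ + (WithLp.toLp 2 (Function.update x i a) - WithLp.toLp 2 (Function.update y i b))‖ ^ 2
      = (Δ i + (a - b)) ^ 2 + transverseSq i Δ (x, y) := by
  rw [EuclideanSpace.real_norm_sq_eq, ← Finset.add_sum_erase _ _ (Finset.mem_univ i), transverseSq]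
  congr 1
  · simp
  · refine Finset.sum_congr rfl fun l hl => ?_
    simp [Finset.ne_of_mem_erase hl, add_sub_assoc]

lemma norm_le_card_mul_of_abs_le {e : ℝ} (he : 0 ≤ e) (hΔ : ∀ l, |Δ l| ≤ e) : ‖Δ‖ ≤ d * e := by
  refine abs_le_of_sq_le_sq' ?_ (by positivity) |>.2
  have hd : (d : ℝ) ≤ (d : ℝ) ^ 2 := by exact_mod_cast Nat.le_self_pow two_ne_zero d
  calc ‖Δ‖ ^ 2 = ∑ l, |Δ l| ^ 2 := by simp only [EuclideanSpace.real_norm_sq_eq, sq_abs]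
    _ ≤ ∑ _l : Fin d, e ^ 2 := by gcongr with l; exact hΔ l
    _ = d * e ^ 2 := by simp
    _ ≤ (d * e) ^ 2 := by rw [mul_pow]; gcongr

lemma abs_transverseSq_sub_le {κ : ℝ} (hΔ : ∀ l, |Δ l| ≤ |Δ i|) (hz : ∀ l, |z.1 l - z.2 l| ≤ κ) :
    |transverseSq i Δ z - ∑ l ∈ Finset.univ.erase i, Δ l ^ 2| ≤ d * (2 * |Δ i| * κ + κ ^ 2) := by
  have hκ : 0 ≤ κ := (abs_nonneg _).trans (hz i)
  rw [transverseSq, ← Finset.sum_sub_distrib]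
  calc _ ≤ ∑ l ∈ Finset.univ.erase i, |(Δ l + z.1 l - z.2 l) ^ 2 - Δ l ^ 2| :=
        Finset.abs_sum_le_sum_abs _ _
    _ ≤ ∑ l ∈ Finset.univ.erase i, (2 * |Δ i| * κ + κ ^ 2) := by
        refine Finset.sum_le_sum fun l _ => ?_
        calc _ = |2 * Δ l * (z.1 l - z.2 l) + (z.1 l - z.2 l) ^ 2| := by ring_nf
          _ ≤ 2 * |Δ l| * |z.1 l - z.2 l| + |z.1 l - z.2 l| ^ 2 := by
              refine (abs_add_le _ _).trans_eq ?_
              rw [abs_mul, abs_mul, abs_two, abs_pow]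
          _ ≤ _ := by
              have hl := hΔ l
              have hzl := hz l
              gcongr
    _ ≤ d * (2 * |Δ i| * κ + κ ^ 2) := by
        rw [Finset.sum_const, nsmul_eq_mul]
        gcongr
        exact_mod_cast (Finset.card_le_univ _).trans_eq (Fintype.card_fin d)

/-- The scale up to which two points and the radius may vary from two corners at displacement `Δ`
and `‖Δ‖` without moving the contact shift outside `[-1/4, 1/4]`. -/
def contactScale (d : ℕ) : ℝ := 1 / (24 * d)

lemma contactScale_pos (i : Fin d) : 0 < contactScale d := by
  have : 0 < d := i.pos
  rw [contactScale]
  positivity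

lemma contactScale_mul (i : Fin d) : contactScale d * d = 1 / 24 := by
  have : (d : ℝ) ≠ 0 := by exact_mod_cast i.pos.ne'
  rw [contactScale]
  field_simp

lemma contactScale_le (i : Fin d) : contactScale d ≤ 1 / 24 := by
  rw [← contactScale_mul i]
  exact le_mul_of_one_le_right (contactScale_pos i).le (by exact_mod_cast i.pos)

lemma abs_sq_sub_transverseSq_sub_le (h3 : 3 ≤ |Δ i|) (hΔ : ∀ l, |Δ l| ≤ |Δ i|)
    (hr : |r - ‖Δ‖| ≤ contactScale d) (hz : ∀ l, |z.1 l - z.2 l| ≤ contactScale d) :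
    |r ^ 2 - transverseSq i Δ z - |Δ i| ^ 2| ≤ |Δ i| / 4 := by
  set κ := contactScale d
  have hκ : 0 < κ := contactScale_pos i
  have hκd : κ * d = 1 / 24 := contactScale_mul i
  have hκ1 : κ ≤ 1 / 24 := contactScale_le i
  have hnorm : ‖Δ‖ ≤ d * |Δ i| := norm_le_card_mul_of_abs_le (abs_nonneg _) hΔ
  have hsum : ‖Δ‖ ^ 2 = |Δ i| ^ 2 + ∑ l ∈ Finset.univ.erase i, Δ l ^ 2 := by
    rw [EuclideanSpace.real_norm_sq_eq, ← Finset.add_sum_erase _ _ (Finset.mem_univ i), sq_abs]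
  have hradius : |r ^ 2 - ‖Δ‖ ^ 2| ≤ |Δ i| / 12 + κ ^ 2 := by
    calc |r ^ 2 - ‖Δ‖ ^ 2| = |r - ‖Δ‖| * |(r - ‖Δ‖) + 2 * ‖Δ‖| := by
          rw [← abs_mul]
          ring_nf
      _ ≤ κ * (κ + 2 * (d * |Δ i|)) := by
          refine mul_le_mul hr ((abs_add_le _ _).trans ?_) (abs_nonneg _) hκ.le
          rw [abs_of_nonneg (by positivity : 0 ≤ 2 * ‖Δ‖)]
          gcongr
      _ = 2 * (κ * d) * |Δ i| + κ ^ 2 := by ring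
      _ = |Δ i| / 12 + κ ^ 2 := by rw [hκd]; ring
  have htransverse : |transverseSq i Δ z - ∑ l ∈ Finset.univ.erase i, Δ l ^ 2|
      ≤ |Δ i| / 12 + κ / 24 := by
    refine (abs_transverseSq_sub_le hΔ hz).trans_eq ?_
    calc d * (2 * |Δ i| * κ + κ ^ 2) = (κ * d) * (2 * |Δ i| + κ) := by ring
      _ = _ := by rw [hκd]; ring
  have hκsq : κ ^ 2 ≤ κ / 24 := by nlinarith
  have h1 := abs_le.1 hradius
  have h2 := abs_le.1 htransverse
  exact abs_le.2 ⟨by linarith, by linarith⟩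

lemma abs_contactShift_le (h3 : 3 ≤ |Δ i|) (hΔ : ∀ l, |Δ l| ≤ |Δ i|)
    (hr : |r - ‖Δ‖| ≤ contactScale d) (hz : ∀ l, |z.1 l - z.2 l| ≤ contactScale d) :
    |contactShift i Δ r z| ≤ 1 / 4 := by
  have hclose := abs_sq_sub_transverseSq_sub_le h3 hΔ hr hz
  set height := contactHeight i Δ r z with hh
  have hnonneg : 0 ≤ height := contactHeight_nonneg
  have hcutoff : height ^ 2 = r ^ 2 - transverseSq i Δ z := by
    rw [hh, contactHeight_sq, max_eq_left]
    nlinarith [(abs_le.1 hclose).1]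
  rw [contactShift, abs_sign_mul (abs_pos.1 (by linarith))]
  refine le_of_mul_le_mul_right ?_ (by linarith : 0 < |Δ i|)
  set e := |Δ i|
  calc |height - e| * e ≤ |height - e| * (height + e) := by gcongr; linarith
    _ = |height ^ 2 - e ^ 2| := by
        rw [sq_sub_sq, abs_mul, mul_comm, abs_of_nonneg (by linarith : 0 ≤ height + e)]
    _ ≤ 1 / 4 * e := by
        rw [hcutoff]
        linarith

lemma box_subset_contactRegion (h3 : 3 ≤ |Δ i|) (hΔ : ∀ l, |Δ l| ≤ |Δ i|)
    (hr : |r - ‖Δ‖| ≤ contactScale d) :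
    Ico (1 / 4 : ℝ) (1 / 2) ×ˢ (univ.pi fun _ => Ico 0 (contactScale d)) ×ˢ
        (univ.pi fun _ => Ico 0 (contactScale d)) ⊆
      contactRegion i (contactShift i Δ r) (univ.pi fun _ => Ico 0 1)
        (univ.pi fun _ => Ico 0 1) := by
  rintro ⟨t, x, y⟩ ⟨ht, hx, hy⟩
  have hκ1 : contactScale d ≤ 1 / 24 := contactScale_le i
  have hunit : Ico 0 (contactScale d) ⊆ Ico (0 : ℝ) 1 := Ico_subset_Ico_right (by linarith)
  have hxy (l : Fin d) : |x l - y l| ≤ contactScale d := by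
    have hxl := hx l (mem_univ l)
    have hyl := hy l (mem_univ l)
    exact abs_le.2 ⟨by linarith [hxl.1, hyl.2], by linarith [hxl.2, hyl.1]⟩
  have hs := abs_le.1 (abs_contactShift_le (z := (x, y)) h3 hΔ hr hxy)
  have hupdate {w : Fin d → ℝ} (hw : w ∈ univ.pi fun _ => Ico 0 (contactScale d)) {a : ℝ}
      (ha : a ∈ Ico (0 : ℝ) 1) : Function.update w i a ∈ univ.pi fun _ => Ico (0 : ℝ) 1 := by
    intro l _
    rcases eq_or_ne l i with rfl | hl
    · simpa using ha
    · simpa [hl] using hunit (hw l (mem_univ l))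
  exact ⟨hunit (hx i (mem_univ i)), hunit (hy i (mem_univ i)),
    hupdate hx ⟨by linarith [ht.1], by linarith [ht.2]⟩,
    hupdate hy ⟨by linarith [ht.1], by linarith [ht.2]⟩⟩

lemma le_contactWeight_nil (h3 : 3 ≤ |Δ i|) (hΔ : ∀ l, |Δ l| ≤ |Δ i|)
    (hr : |r - ‖Δ‖| ≤ contactScale d) :
    contactScale d ^ (2 * d) / 4 ≤ contactWeight (M := M) i (contactShift i Δ r) [] [] := by
  have hvol : volume.real (Ico (1 / 4 : ℝ) (1 / 2) ×ˢ
      (univ.pi fun _ : Fin d => Ico 0 (contactScale d)) ×ˢ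
        (univ.pi fun _ : Fin d => Ico 0 (contactScale d))) = contactScale d ^ (2 * d) / 4 := by
    have hbox : volume.real (univ.pi fun _ : Fin d => Ico 0 (contactScale d))
        = contactScale d ^ d := by
      simp [measureReal_def, volume_pi_pi, (contactScale_pos i).le]
    rw [Measure.volume_eq_prod, measureReal_prod_prod, Measure.volume_eq_prod,
      measureReal_prod_prod, hbox, Real.volume_real_Ico_of_le (by norm_num), two_mul, pow_add]
    ring
  rw [← hvol, contactWeight]
  refine measureReal_mono ?_ (volume_contactRegion_ne_top measurable_contactShift _ _)
  rw [halfOpenCube_nil]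
  exact box_subset_contactRegion h3 hΔ hr

variable [NeZero M]

/-- The cutoff in `contactHeight` is inactive here: the shift is the difference of two numbers in
`[0, 1)`, while an active cutoff would make it as large as `|Δ i| / 2`. -/
lemma touch_of_contactWeight_pos (hΔ : 2 ≤ |Δ i|) (hr : 0 ≤ r) {u v : List (Alpha d M)}
    (h : 0 < contactWeight i (contactShift i Δ r) u v) : Touch Δ r u v := by
  obtain ⟨⟨t, x, y⟩, -, -, hu, hv⟩ := nonempty_of_measureReal_ne_zero h.ne'
  set s := contactShift i Δ r (x, y) with hs
  set height := contactHeight i Δ r (x, y)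
  refine ⟨_, toLp_mem_wordCube hu, _, toLp_mem_wordCube hv, ?_⟩
  have hΔ0 : Δ i ≠ 0 := abs_pos.1 (by linarith)
  have hs1 : |s| < 1 := by
    have hti := halfOpenCube_subset u hu i (mem_univ i)
    have hi := halfOpenCube_subset v hv i (mem_univ i)
    simp only [Function.update_self, mem_Ico] at hti hi
    exact abs_lt.2 ⟨by linarith, by linarith⟩
  have hheight : |Δ i| / 2 < height := by
    rw [hs, contactShift, abs_sign_mul hΔ0] at hs1
    linarith [(abs_lt.1 hs1).1]
  have hcutoff : height ^ 2 = r ^ 2 - transverseSq i Δ (x, y) := by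
    have hmax : height ^ 2 = max _ _ := contactHeight_sq
    rcases max_choice (r ^ 2 - transverseSq i Δ (x, y)) ((|Δ i| / 2) ^ 2) with hm | hm
    · rw [hmax, hm]
    · rw [hm] at hmax
      nlinarith [abs_nonneg (Δ i)]
  have hi : (Δ i + (t + s - t)) ^ 2 = height ^ 2 := by
    rw [add_sub_cancel_left, hs, contactShift, mul_sub, sign_mul_abs, add_sub_cancel, ← sq_abs,
      abs_sign_mul hΔ0, sq_abs]
  rw [← sq_eq_sq₀ (norm_nonneg _) hr, norm_sq_add_update_sub_update, hi, hcutoff, sub_add_cancel]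

lemma isWeightFamily_contactWeight (h3 : 3 ≤ |Δ i|) (hΔ : ∀ l, |Δ l| ≤ |Δ i|) :
    IsWeightFamily (M := M) (fun t => contactWeight i (contactShift i Δ (‖Δ‖ + t)))
      (Icc (-contactScale d) (contactScale d)) (8 * d) (contactScale d ^ (2 * d) / 4) where
  isWeight _ _ := isWeight_contactWeight measurable_contactShift
  lipschitz s hs t ht u v := by
    have hd : (1 : ℝ) ≤ d := by exact_mod_cast i.pos
    have hκ1 : contactScale d ≤ 1 / 24 := contactScale_le i
    have hlower : |Δ i| ≤ ‖Δ‖ := PiLp.norm_apply_le Δ i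
    have hupper : ‖Δ‖ ≤ d * |Δ i| := norm_le_card_mul_of_abs_le (abs_nonneg _) hΔ
    have hrange {t : ℝ} (ht : t ∈ Icc (-contactScale d) (contactScale d)) :
        ‖Δ‖ + t ∈ Icc 0 (2 * d * |Δ i|) :=
      ⟨by linarith [ht.1], by nlinarith [ht.2, hd]⟩
    refine (abs_contactWeight_sub_le (ε := 4 * d * |s - t|) measurable_contactShift
      measurable_contactShift (fun z => ?_) u v).trans_eq (by ring)
    simpa only [add_sub_add_left_eq_sub] using
      abs_contactShift_sub_le (z := z) (by linarith) (hrange hs) (hrange ht)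
  le_nil t ht := le_contactWeight_nil h3 hΔ (by rwa [add_sub_cancel_left, abs_le])

end Contact

section Hitting

/-- Once the first percolation is translated by `Δ`, the distance `r` is attained between retained
level-`n` cubes of the two. -/
def Hit (Δ : EuclideanSpace ℝ (Fin d)) (r : ℝ) (n : ℕ) (ω : Config d M) : Prop :=
  ∃ u ∈ survivors 0 false n ω, ∃ v ∈ survivors 0 true n ω, Touch Δ r u v

/-- The event that, once the first percolation is translated by `Δ`, all distances in some open
interval are attained at all large levels. The end points are rational to make the event
measurable. -/
def intervalEvent (Δ : EuclideanSpace ℝ (Fin d)) : Set (Config d M) :=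
  {ω | ∃ a b : ℚ, a < b ∧ ∃ N, ∀ n ≥ N, ∀ r ∈ Ioo (a : ℝ) b, Hit Δ r n ω}

lemma measurableSet_intervalEvent (Δ : EuclideanSpace ℝ (Fin d)) :
    MeasurableSet (intervalEvent Δ : Set (Config d M)) := by
  have measurableSet_hit : ∀ (a b : ℚ) n,
      MeasurableSet {ω : Config d M | ∀ r ∈ Ioo (a : ℝ) b, Hit Δ r n ω} := fun a b n =>
    measurableSet_setOfPred.2 <| (measurable_comp_survivors 0 (m := fun _ => n) (subset_univ _)
      fun s => ∀ r ∈ Ioo (a : ℝ) b, ∃ u ∈ s false, ∃ v ∈ s true, Touch Δ r u v).mono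
        cylinderEvents_le_pi le_rfl
  have : (intervalEvent Δ : Set (Config d M)) = ⋃ (a : ℚ) (b : ℚ) (_ : a < b) (N : ℕ),
      ⋂ n ≥ N, {ω | ∀ r ∈ Ioo (a : ℝ) b, Hit Δ r n ω} := by
    ext ω
    simp only [intervalEvent, mem_ofPred_eq, mem_iUnion, mem_iInter, exists_prop]
  rw [this]
  exact .iUnion fun a => .iUnion fun b => .iUnion fun _ => .iUnion fun N => .iInter fun n =>
    .iInter fun _ => measurableSet_hit a b n

lemma survivors_subset_of_forall_eq_true {J : ℕ} {ω : Config d M}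
    (hω : ∀ i : Bool × Word d M, i.2.1.length ≤ J → ω i = true) (σ : Bool) (n : ℕ) :
    survivors J σ n ω ⊆ survivors 0 σ n ω := by
  intro w hw
  rw [mem_survivors] at hw ⊢
  refine ⟨hw.1, fun u hu huw _ => ?_⟩
  obtain hJ | hJ := lt_or_ge J u.length
  · exact hw.2 u hu huw hJ
  · exact hω (σ, ⟨u, hu⟩) hJ

variable {p : Bool → ℝ} {P : Measure (Config d M)}

lemma measurableSet_forall_eq_true {S : Set (Bool × Word d M)} (hS : S.Finite) :
    MeasurableSet[cylinderEvents S] {ω : Config d M | ∀ i ∈ S, ω i = true} :=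
  measurableSet_cylinderEvents_of_dependsOn hS fun ω ω' h => by simp +contextual only [h _]

lemma IsPairPercolation.measure_forall_eq_true_pos (hP : IsPairPercolation p P)
    (hp : ∀ σ, 0 < p σ) {S : Set (Bool × Word d M)} (hS : S.Finite) :
    0 < P {ω | ∀ i ∈ S, ω i = true} := by
  have := hP.isProbabilityMeasure
  have inter_eq := hP.indep.measure_inter_preimage_eq_mul hS.toFinset (sets := fun _ => {true})
    fun i _ => measurableSet_singleton true
  have : {ω : Config d M | ∀ i ∈ S, ω i = true} =
      ⋂ i ∈ hS.toFinset, (fun ω => ω i) ⁻¹' {true} := by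
    ext ω
    simp
  rw [this, inter_eq, pos_iff_ne_zero, Finset.prod_ne_zero_iff]
  intro i _ h
  have real_eq := hP.real_true i
  rw [measureReal_def, show P {ω | ω i = true} = 0 from h, ENNReal.toReal_zero] at real_eq
  exact (hp i.1).ne real_eq

lemma measurableSet_forall_pairMass_pos (J : ℕ) (I : Set ℝ)
    (f : ℝ → List (Alpha d M) → List (Alpha d M) → ℝ) :
    MeasurableSet[cylinderEvents {i : Bool × Word d M | i.2.1.length ≤ J}ᶜ]
      {ω : Config d M | ∀ n ≥ J, ∀ t ∈ I, 0 < pairMass (f t) J false n n ω} := by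
  have measurableSet_level : ∀ n,
      MeasurableSet[cylinderEvents {i : Bool × Word d M | i.2.1.length ≤ J}ᶜ]
        {ω : Config d M | ∀ t ∈ I, 0 < pairMass (f t) J false n n ω} := fun n =>
    (@measurableSet_setOfPred _ (cylinderEvents _) _).2 <| measurable_comp_survivors J
      (m := fun _ => n) (fun i hi => not_le.2 hi.1)
      fun s => ∀ t ∈ I, 0 < ∑ u ∈ s false, ∑ v ∈ s true, f t u v
  simp only [ofPred_forall]
  exact .iInter fun n => .iInter fun _ => by simpa only [ofPred_forall] using measurableSet_level n

lemma hit_of_pairMass_pos [NeZero M] {J n : ℕ} {ω : Config d M} {i : Fin d}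
    {Δ : EuclideanSpace ℝ (Fin d)} {r : ℝ} (hΔ : 2 ≤ |Δ i|) (hr : 0 ≤ r)
    (hω : ∀ i : Bool × Word d M, i.2.1.length ≤ J → ω i = true)
    (h : 0 < pairMass (contactWeight i (contactShift i Δ r)) J false n n ω) : Hit Δ r n ω := by
  obtain ⟨u, hu, hu_pos⟩ := Finset.exists_lt_of_sum_lt (f := fun _ => (0 : ℝ))
    (by simpa [pairMass] using h)
  obtain ⟨v, hv, hv_pos⟩ := Finset.exists_lt_of_sum_lt (f := fun _ => (0 : ℝ))
    (by simpa using hu_pos)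
  exact ⟨u, survivors_subset_of_forall_eq_true hω _ _ hu, v,
    survivors_subset_of_forall_eq_true hω _ _ hv, touch_of_contactWeight_pos hΔ hr hv_pos⟩

lemma mem_intervalEvent_of_pairMass_pos [NeZero M] {J : ℕ} {ω : Config d M} {i : Fin d}
    {Δ : EuclideanSpace ℝ (Fin d)} {ε : ℝ} (hε : 0 < ε) (hε2 : ε ≤ 2) (hΔ : 2 ≤ |Δ i|)
    (hω : ∀ i : Bool × Word d M, i.2.1.length ≤ J → ω i = true)
    (h : ∀ n ≥ J, ∀ t ∈ Icc (-ε) ε,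
      0 < pairMass (contactWeight i (contactShift i Δ (‖Δ‖ + t))) J false n n ω) :
    ω ∈ intervalEvent Δ := by
  obtain ⟨a, ha, ha'⟩ := exists_rat_btwn (show ‖Δ‖ - ε < ‖Δ‖ by linarith)
  obtain ⟨b, hb, hb'⟩ := exists_rat_btwn (show ‖Δ‖ < ‖Δ‖ + ε by linarith)
  refine ⟨a, b, by exact_mod_cast ha'.trans hb, J, fun n hn r hr => ?_⟩
  have norm_ge : 2 ≤ ‖Δ‖ := hΔ.trans (PiLp.norm_apply_le Δ i)
  refine hit_of_pairMass_pos hΔ (by linarith [hr.1]) hω ?_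
  simpa using h n hn (r - ‖Δ‖) ⟨by linarith [hr.1], by linarith [hr.2]⟩

lemma exists_le_measure_intervalEvent [NeZero M] (R : GrowthRates d M p)
    (hP : IsPairPercolation p P) (hp : ∀ σ, 0 < p σ) (hp1 : ∀ σ, p σ ≤ 1) :
    ∃ c > 0, ∀ (i : Fin d) (Δ : EuclideanSpace ℝ (Fin d)), 3 ≤ |Δ i| → (∀ l, |Δ l| ≤ |Δ i|) →
      c ≤ P (intervalEvent Δ) := by
  obtain _ | ⟨⟨i₀⟩⟩ := isEmpty_or_nonempty (Fin d)
  · exact ⟨1, one_pos, isEmptyElim⟩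
  have scale_pos := contactScale_pos i₀
  obtain ⟨J, hJ⟩ := exists_level_half_le_measure R hP hp hp1 (L := 8 * d)
    (a := contactScale d ^ (2 * d) / 4) (by positivity) (by positivity)
    (neg_le_self scale_pos.le)
  let S : Set (Bool × Word d M) := {i | i.2.1.length ≤ J}
  have finite_S : S.Finite := finite_labels fun _ => J
  refine ⟨P {ω | ∀ i ∈ S, ω i = true} * 2⁻¹,
    ENNReal.mul_pos (hP.measure_forall_eq_true_pos hp finite_S).ne' (by simp), ?_⟩
  intro i Δ h3 hmax
  let f (t : ℝ) := contactWeight (M := M) i (contactShift i Δ (‖Δ‖ + t))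
  let I := Icc (-contactScale d) (contactScale d)
  calc P {ω | ∀ i ∈ S, ω i = true} * 2⁻¹
      ≤ P {ω | ∀ i ∈ S, ω i = true} *
          P {ω | ∀ n ≥ J, ∀ t ∈ I, 0 < pairMass (f t) J false n n ω} := by
        gcongr
        exact hJ f (isWeightFamily_contactWeight h3 hmax)
    _ = P ({ω | ∀ i ∈ S, ω i = true} ∩
          {ω | ∀ n ≥ J, ∀ t ∈ I, 0 < pairMass (f t) J false n n ω}) :=
        ((Indep_iff _ _ _).1 (indep_cylinderEvents hP.indep disjoint_compl_right) _ _
          (measurableSet_forall_eq_true finite_S) (measurableSet_forall_pairMass_pos J I f)).symm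
    _ ≤ P (intervalEvent Δ) := measure_mono fun ω hω =>
        mem_intervalEvent_of_pairMass_pos scale_pos
          ((contactScale_le i).trans (by norm_num)) (by linarith) hω.1 hω.2

end Hitting

section Zoom

/-- Reads the word of `i` as an address inside the cube `w i.1`. -/
def prepend (w : Bool → List (Alpha d M)) (i : Bool × Word d M) : Bool × Word d M :=
  (i.1, ⟨w i.1 ++ i.2.1, by simp [i.2.2]⟩)

lemma prepend_injective (w : Bool → List (Alpha d M)) : Function.Injective (prepend w) := by
  rintro ⟨σ, u, hu⟩ ⟨τ, v, hv⟩ h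
  simp only [prepend, Prod.mk.injEq, Subtype.mk.injEq] at h
  obtain ⟨rfl, h⟩ := h
  simpa using h

/-- The joint labelling seen from the cubes `w false` and `w true`, one for each percolation. -/
def shift (w : Bool → List (Alpha d M)) (ω : Config d M) : Config d M :=
  fun i => ω (prepend w i)

lemma measurable_shift (w : Bool → List (Alpha d M)) {k : ℕ} (hw : ∀ σ, (w σ).length = k) :
    Measurable[cylinderEvents {i | i.2.1.length ≤ k}ᶜ] (shift w) := by
  refine @measurable_pi_lambda _ _ _ (cylinderEvents _) _ _ fun i =>
    measurable_cylinderEvent_apply ?_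
  simpa [prepend, hw] using i.2.2

lemma IsPairPercolation.map_apply_congr {p : Bool → ℝ} {P : Measure (Config d M)}
    (hP : IsPairPercolation p P) {i j : Bool × Word d M} (h : i.1 = j.1) :
    P.map (fun ω => ω i) = P.map (fun ω => ω j) := by
  have := hP.isProbabilityMeasure
  have map_singleton_true : ∀ i, P.map (fun ω => ω i) {true} = ENNReal.ofReal (p i.1) := fun i => by
    rw [Measure.map_apply (measurable_pi_apply i) (measurableSet_singleton _), ← hP.real_true,
      ofReal_measureReal]
    rfl
  have map_singleton_false : ∀ i, P.map (fun ω => ω i) {false} = 1 - ENNReal.ofReal (p i.1) :=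
    fun i => by
      have := Measure.isProbabilityMeasure_map (μ := P) (measurable_pi_apply i).aemeasurable
      rw [← map_singleton_true, ← prob_compl_eq_one_sub (measurableSet_singleton _)]
      congr 1
      ext b
      simp
  refine Measure.ext_of_singleton fun b => ?_
  cases b
  · rw [map_singleton_false, map_singleton_false, h]
  · rw [map_singleton_true, map_singleton_true, h]

lemma IsPairPercolation.map_shift {p : Bool → ℝ} {P : Measure (Config d M)}
    (hP : IsPairPercolation p P) (w : Bool → List (Alpha d M)) : P.map (shift w) = P := by
  have := hP.isProbabilityMeasure
  have map_shift := (iIndepFun_iff_map_fun_eq_infinitePi_map fun i => measurable_pi_apply _).1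
    (hP.indep.precomp (prepend_injective w))
  have map_id := (iIndepFun_iff_map_fun_eq_infinitePi_map fun i => measurable_pi_apply i).1 hP.indep
  calc P.map (shift w)
      = Measure.infinitePi fun i => P.map fun ω => ω (prepend w i) := map_shift
    _ = Measure.infinitePi fun i => P.map fun ω => ω i := by
        congr 1 with i : 1
        exact hP.map_apply_congr rfl
    _ = P := by rw [← map_id]; exact Measure.map_id

lemma append_mem_survivors {w : Bool → List (Alpha d M)} {σ : Bool} {k n : ℕ} {ω : Config d M}
    {u : List (Alpha d M)} (hw : w σ ∈ survivors 0 σ k ω) (hu : u ∈ survivors 0 σ n (shift w ω)) :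
    w σ ++ u ∈ survivors 0 σ (k + n) ω := by
  rw [mem_survivors] at hw hu ⊢
  refine ⟨by simp [hw.1, hu.1], fun v hv hvw hv_pos => ?_⟩
  obtain h | ⟨v, rfl⟩ := List.prefix_or_prefix_of_prefix hvw (List.prefix_append (w σ) u)
  · exact hw.2 v hv h hv_pos
  obtain rfl | hv' := eq_or_ne v []
  · exact hw.2 _ hv (by simp) hv_pos
  · exact hu.2 v hv' ((List.prefix_append_right_inj _).1 hvw) (List.length_pos_iff.2 hv')

/-- The lower-left corner of the cube indexed by `w`. -/
def corner (w : List (Alpha d M)) : EuclideanSpace ℝ (Fin d) := WithLp.toLp 2 (wordBase d M w)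

lemma corner_add_smul_mem_wordCube [NeZero M] (w : List (Alpha d M)) {u : List (Alpha d M)}
    {x : EuclideanSpace ℝ (Fin d)} (hx : x ∈ wordCube d M u) :
    corner w + (M : ℝ)⁻¹ ^ w.length • x ∈ wordCube d M (w ++ u) := by
  rw [mem_wordCube] at hx ⊢
  intro i
  have scale_nonneg : 0 ≤ (M : ℝ)⁻¹ ^ w.length := by positivity
  rw [wordBase_append, List.length_append, pow_add, add_assoc, ← mul_add]
  exact ⟨add_le_add_right (mul_le_mul_of_nonneg_left (hx i).1 scale_nonneg) _,
    add_le_add_right (mul_le_mul_of_nonneg_left (hx i).2 scale_nonneg) _⟩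

/-- The relative displacement of the level-`k` cubes `w false` and `w true`, the former translated
by `Δ`, after blowing them up to unit size. -/
def zoom (Δ : EuclideanSpace ℝ (Fin d)) (k : ℕ) (w : Bool → List (Alpha d M)) :
    EuclideanSpace ℝ (Fin d) :=
  (M : ℝ) ^ k • (Δ + (corner (w false) - corner (w true)))

lemma Touch.append [NeZero M] {Δ : EuclideanSpace ℝ (Fin d)} {r : ℝ} {k : ℕ}
    {w : Bool → List (Alpha d M)} (hw : ∀ σ, (w σ).length = k) {u v : List (Alpha d M)}
    (h : Touch (zoom Δ k w) r u v) :
    Touch Δ ((M : ℝ)⁻¹ ^ k * r) (w false ++ u) (w true ++ v) := by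
  obtain ⟨x, hx, y, hy, rfl⟩ := h
  refine ⟨_, corner_add_smul_mem_wordCube _ hx, _, corner_add_smul_mem_wordCube _ hy, ?_⟩
  have scale_mul : (M : ℝ)⁻¹ ^ k * (M : ℝ) ^ k = 1 := by
    rw [← mul_pow, inv_mul_cancel₀ (NeZero.ne _), one_pow]
  have scale_nonneg : 0 ≤ (M : ℝ)⁻¹ ^ k := by positivity
  rw [← abs_of_nonneg scale_nonneg, ← Real.norm_eq_abs, ← norm_smul, zoom, smul_add, smul_smul,
    scale_mul, hw, hw]
  congr 1
  module

lemma mem_intervalEvent_of_shift_mem [NeZero M] {Δ : EuclideanSpace ℝ (Fin d)} {k : ℕ}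
    {w : Bool → List (Alpha d M)} {ω : Config d M} (hw : ∀ σ, w σ ∈ survivors 0 σ k ω)
    (h : shift w ω ∈ intervalEvent (zoom Δ k w)) : ω ∈ intervalEvent Δ := by
  obtain ⟨a, b, hab, N, hN⟩ := h
  have scale_pos : (0 : ℝ) < M ^ k := pow_pos (by exact_mod_cast NeZero.pos M) k
  have scale_pos' : (0 : ℚ) < M ^ k := by exact_mod_cast scale_pos
  refine ⟨a / M ^ k, b / M ^ k, by gcongr, k + N, fun n hn r hr => ?_⟩
  push_cast at hr
  rw [mem_Ioo, div_lt_iff₀ scale_pos, lt_div_iff₀ scale_pos] at hr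
  obtain ⟨n, rfl⟩ := Nat.exists_eq_add_of_le ((Nat.le_add_right k N).trans hn)
  obtain ⟨u, hu, v, hv, huv⟩ := hN n (by omega) (r * M ^ k) hr
  refine ⟨_, append_mem_survivors (hw false) hu, _, append_mem_survivors (hw true) hv, ?_⟩
  have touch := huv.append fun σ => (mem_survivors.1 (hw σ)).1
  rwa [inv_pow, mul_comm r, inv_mul_cancel_left₀ scale_pos.ne'] at touch

end Zoom

section ZeroOne

lemma zoom_pair [NeZero M] (Δ : EuclideanSpace ℝ (Fin d)) (s : Bool → Alpha d M) (l : Fin d) :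
    zoom Δ 2 (fun σ => [s σ, s σ]) l =
      M ^ 2 * Δ l + (M + 1) * ((s false l : ℝ) - (s true l : ℝ)) := by
  have hM : (M : ℝ) ≠ 0 := NeZero.ne _
  simp only [zoom, corner, PiLp.smul_apply, PiLp.add_apply, PiLp.sub_apply, wordBase_cons,
    wordBase_nil, smul_eq_mul]
  field_simp
  ring

lemma exists_letters_abs_eq [NeZero M] (i : Fin d) (x : ℝ) :
    ∃ s : Bool → Alpha d M, (∀ l ≠ i, s false l = s true l) ∧
      |M ^ 2 * x + (M + 1) * ((s false i : ℝ) - (s true i : ℝ))| = M ^ 2 * |x| + (M ^ 2 - 1) := by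
  have hM : 1 ≤ M := NeZero.one_le
  have hM' : (1 : ℝ) ≤ M := by exact_mod_cast hM
  let far : Alpha d M := Function.update 0 i ⟨M - 1, by omega⟩
  have far_apply : ((far i : ℕ) : ℝ) = M - 1 := by simp [far, Nat.cast_sub hM]
  have far_of_ne : ∀ l ≠ i, far l = 0 := fun l hl => by simp [far, hl]
  obtain hx | hx := le_total 0 x
  · refine ⟨fun σ => bif σ then 0 else far, far_of_ne, ?_⟩
    simp only [cond_true, cond_false, far_apply, Pi.zero_apply, Fin.val_zero, Nat.cast_zero]
    rw [abs_of_nonneg hx, abs_of_nonneg] <;> nlinarith [mul_nonneg (sq_nonneg (M : ℝ)) hx]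
  · refine ⟨fun σ => bif σ then far else 0, fun l hl => (far_of_ne l hl).symm, ?_⟩
    simp only [cond_true, cond_false, far_apply, Pi.zero_apply, Fin.val_zero, Nat.cast_zero]
    rw [abs_of_nonpos hx, abs_of_nonpos] <;> nlinarith [mul_nonneg_of_nonpos_of_nonpos
      (neg_nonpos.2 (sq_nonneg (M : ℝ))) hx]

lemma exists_zoom_dominated [Nonempty (Fin d)] (hM : 2 ≤ M) (Δ : EuclideanSpace ℝ (Fin d)) :
    ∃ s : Bool → Alpha d M, ∃ i, 3 ≤ |zoom Δ 2 (fun σ => [s σ, s σ]) i| ∧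
      ∀ l, |zoom Δ 2 (fun σ => [s σ, s σ]) l| ≤ |zoom Δ 2 (fun σ => [s σ, s σ]) i| := by
  have : NeZero M := ⟨by omega⟩
  obtain ⟨i, hi⟩ := Finite.exists_max fun l => |Δ l|
  obtain ⟨s, hs, hsi⟩ := exists_letters_abs_eq (M := M) i (Δ i)
  have gain : (4 : ℝ) ≤ M ^ 2 := by exact_mod_cast Nat.pow_le_pow_left hM 2
  refine ⟨s, i, ?_, fun l => ?_⟩
  · rw [zoom_pair, hsi]
    nlinarith [abs_nonneg (Δ i)]
  obtain rfl | hl := eq_or_ne l i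
  · exact le_rfl
  · rw [zoom_pair, zoom_pair, hsi, hs l hl, sub_self, mul_zero, add_zero, abs_mul,
      abs_of_nonneg (sq_nonneg (M : ℝ))]
    nlinarith [hi l]

variable {p : Bool → ℝ} {P : Measure (Config d M)}

lemma IsPairPercolation.measure_inter_shift_preimage (hP : IsPairPercolation p P) {k : ℕ}
    {w : Bool → List (Alpha d M)} (hw : ∀ σ, (w σ).length = k) {A B : Set (Config d M)}
    (hA : MeasurableSet[cylinderEvents {i | i.2.1.length ≤ k}] A) (hB : MeasurableSet B) :
    P (A ∩ shift w ⁻¹' B) = P A * P B := by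
  have measurable : Measurable (shift w) := (measurable_shift w hw).mono cylinderEvents_le_pi le_rfl
  rw [(Indep_iff _ _ _).1 (indep_cylinderEvents hP.indep disjoint_compl_right) A _ hA
    (measurable_shift w hw hB), ← Measure.map_apply measurable hB, hP.map_shift]

lemma exists_forall_le_measure_intervalEvent [Nonempty (Fin d)] (hM : 2 ≤ M)
    (R : GrowthRates d M p) (hP : IsPairPercolation p P) (hp : ∀ σ, 0 < p σ)
    (hp1 : ∀ σ, p σ ≤ 1) : ∃ c > 0, ∀ Δ, c ≤ P (intervalEvent Δ) := by
  have : NeZero M := ⟨by omega⟩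
  obtain ⟨c, hc, hcΔ⟩ := exists_le_measure_intervalEvent R hP hp hp1
  let S : Set (Bool × Word d M) := {i | i.2.1.length ≤ 2}
  have finite_S : S.Finite := finite_labels fun _ => 2
  refine ⟨P {ω | ∀ i ∈ S, ω i = true} * c,
    ENNReal.mul_pos (hP.measure_forall_eq_true_pos hp finite_S).ne' hc.ne', fun Δ => ?_⟩
  obtain ⟨s, i, h3, hmax⟩ := exists_zoom_dominated hM Δ
  let w (σ : Bool) : List (Alpha d M) := [s σ, s σ]
  calc P {ω | ∀ i ∈ S, ω i = true} * c
      ≤ P {ω | ∀ i ∈ S, ω i = true} * P (intervalEvent (zoom Δ 2 w)) := by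
        gcongr
        exact hcΔ i _ h3 hmax
    _ = P ({ω | ∀ i ∈ S, ω i = true} ∩ shift w ⁻¹' intervalEvent (zoom Δ 2 w)) :=
        (hP.measure_inter_shift_preimage (k := 2) (fun _ => rfl)
          (measurableSet_forall_eq_true finite_S) (measurableSet_intervalEvent _)).symm
    _ ≤ P (intervalEvent Δ) := measure_mono fun ω hω => by
        refine mem_intervalEvent_of_shift_mem (k := 2) (fun σ => ?_) hω.2
        exact mem_survivors.2 ⟨rfl, fun u hu huw _ => hω.1 (σ, ⟨u, hu⟩) huw.length_le⟩

/-- The information carried by the labels of the first `n` levels. -/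
def levelFiltration (d M : ℕ) :
    Filtration ℕ (MeasurableSpace.pi : MeasurableSpace (Config d M)) where
  seq n := cylinderEvents {i | i.2.1.length ≤ n}
  mono' _ _ h := cylinderEvents_mono fun _ hi => le_trans hi h
  le' _ := cylinderEvents_le_pi

lemma iSup_levelFiltration : ⨆ n, levelFiltration d M n = MeasurableSpace.pi := by
  refine le_antisymm (iSup_le (levelFiltration d M).le) (iSup_le fun i => ?_)
  have hi : i ∈ {j : Bool × Word d M | j.2.1.length ≤ i.2.1.length} := by simp
  exact (measurable_cylinderEvent_apply hi).comap_le.trans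
    (le_iSup (fun n => levelFiltration d M n) i.2.1.length)

lemma ae_le_condExp_of_forall_le {Ω : Type*} {m m₀ : MeasurableSpace Ω} {μ : Measure Ω}
    [IsFiniteMeasure μ] (hm : m ≤ m₀) {R G : Set Ω} (hR : MeasurableSet[m] R)
    (hG : MeasurableSet G) {c : ℝ}
    (h : ∀ A, MeasurableSet[m] A → A ⊆ R → c * μ.real A ≤ μ.real (A ∩ G)) :
    ∀ᵐ ω ∂μ, ω ∈ R → c ≤ (μ⟦G | m⟧) ω := by
  have key : R.indicator (fun _ => c) ≤ᵐ[μ.trim hm] R.indicator (μ⟦G | m⟧) := by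
    refine ae_le_of_forall_setIntegral_le ?_ ?_ fun A hA _ => ?_
    · exact (integrable_const c).indicator hR
    · exact (integrable_condExp.trim hm stronglyMeasurable_condExp).indicator hR
    rw [← setIntegral_trim hm (stronglyMeasurable_const.indicator hR) hA,
      ← setIntegral_trim hm (stronglyMeasurable_condExp.indicator hR) hA,
      setIntegral_indicator (hm _ hR), setIntegral_indicator (hm _ hR),
      setIntegral_condExp hm ((integrable_const 1).indicator hG) (hA.inter hR),
      setIntegral_const, setIntegral_indicator hG, setIntegral_const, smul_eq_mul,
      smul_eq_mul, mul_one, mul_comm]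
    exact h _ (hA.inter hR) inter_subset_right
  filter_upwards [ae_le_of_ae_le_trim key] with ω hω hωR
  simpa [hωR] using hω

lemma ae_mem_of_forall_le_condExp {Ω : Type*} {m₀ : MeasurableSpace Ω} {μ : Measure Ω}
    [IsFiniteMeasure μ] {ℱ : Filtration ℕ m₀} {G : Set Ω} (hG : MeasurableSet[⨆ n, ℱ n] G)
    {S : ℕ → Set Ω} {c : ℝ} (hc : 0 < c) (h : ∀ n, ∀ᵐ ω ∂μ, ω ∈ S n → c ≤ (μ⟦G | ℱ n⟧) ω) :
    ∀ᵐ ω ∂μ, (∀ n, ω ∈ S n) → ω ∈ G := by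
  have condExp_eq : μ⟦G | ⨆ n, ℱ n⟧ = G.indicator fun _ => (1 : ℝ) :=
    condExp_of_stronglyMeasurable (iSup_le ℱ.le) (stronglyMeasurable_const.indicator hG)
      ((integrable_const 1).indicator (iSup_le ℱ.le _ hG))
  filter_upwards [tendsto_ae_condExp (μ := μ) (ℱ := ℱ) (G.indicator fun _ => (1 : ℝ)),
    ae_all_iff.2 h] with ω hlim hω hωS
  rw [condExp_eq] at hlim
  by_contra hωG
  rw [indicator_of_notMem hωG] at hlim
  exact hc.not_ge (ge_of_tendsto' hlim fun n => hω n (hωS n))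

lemma ae_mem_intervalEvent_of_survivors_nonempty [Nonempty (Fin d)] (hM : 2 ≤ M)
    (R : GrowthRates d M p) (hP : IsPairPercolation p P) (hp : ∀ σ, 0 < p σ)
    (hp1 : ∀ σ, p σ ≤ 1) :
    ∀ᵐ ω ∂P, (∀ k σ, (survivors 0 σ k ω).Nonempty) → ω ∈ intervalEvent 0 := by
  have : NeZero M := ⟨by omega⟩
  have := hP.isProbabilityMeasure
  obtain ⟨c, hc, hcΔ⟩ := exists_forall_le_measure_intervalEvent hM R hP hp hp1
  have c_ne_top : c ≠ ∞ := ((hcΔ 0).trans_lt (measure_lt_top P _)).ne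
  have measurableSet_level : ∀ k (w : Bool → List (Alpha d M)),
      MeasurableSet[levelFiltration d M k] {ω : Config d M | ∀ σ, w σ ∈ survivors 0 σ k ω} :=
    fun k w => (@measurableSet_setOfPred _ (levelFiltration d M k) _).2 <|
      measurable_comp_survivors 0 (m := fun _ => k) (fun _ hi => hi.2) fun s => ∀ σ, w σ ∈ s σ
  have le_condExp : ∀ k (w : Bool → List (Alpha d M)), ∀ᵐ ω ∂P,
      (∀ σ, w σ ∈ survivors 0 σ k ω) →
        c.toReal ≤ (P⟦intervalEvent 0 | levelFiltration d M k⟧) ω := by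
    intro k w
    refine ae_le_condExp_of_forall_le ((levelFiltration d M).le k) (measurableSet_level k w)
      (measurableSet_intervalEvent 0) fun A hA hAw => ?_
    obtain rfl | ⟨ω₀, hω₀⟩ := A.eq_empty_or_nonempty
    · simp
    have hw : ∀ σ, (w σ).length = k := fun σ => (mem_survivors.1 (hAw hω₀ σ)).1
    rw [measureReal_def, measureReal_def, ← ENNReal.toReal_mul]
    refine ENNReal.toReal_mono (measure_ne_top P _) ?_
    calc c * P A ≤ P A * P (intervalEvent (zoom 0 k w)) := by
          rw [mul_comm]; gcongr; exact hcΔ _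
      _ = P (A ∩ shift w ⁻¹' intervalEvent (zoom 0 k w)) :=
          (hP.measure_inter_shift_preimage hw hA (measurableSet_intervalEvent _)).symm
      _ ≤ P (A ∩ intervalEvent 0) := measure_mono fun ω hω =>
          ⟨hω.1, mem_intervalEvent_of_shift_mem (hAw hω.1) hω.2⟩
  have key := ae_mem_of_forall_le_condExp (ℱ := levelFiltration d M)
    (S := fun k => {ω | ∀ σ, (survivors 0 σ k ω).Nonempty})
    (by rw [iSup_levelFiltration]; exact measurableSet_intervalEvent 0)
    (ENNReal.toReal_pos hc.ne' c_ne_top) fun k => by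
      filter_upwards [ae_all_iff.2 (le_condExp k)] with ω hω hne
      choose w hw using hne
      exact hω w hw
  exact key

end ZeroOne

section Pair

lemma iIndepFun_of_iIndepSet_eq_true {ι Ω : Type*} [MeasurableSpace Ω] {μ : Measure Ω}
    {X : ι → Ω → Bool} (h : iIndepSet (fun i => {ω | X i ω = true}) μ) : iIndepFun X μ := by
  suffices ∀ i, MeasurableSpace.generateFrom {{ω | X i ω = true}} =
      MeasurableSpace.comap (X i) inferInstance by
    simpa only [iIndepFun_iff_iIndep, ProbabilityTheory.iIndep, iIndepSet, Kernel.iIndepSet,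
      this] using h
  refine fun i => le_antisymm (MeasurableSpace.generateFrom_singleton_le ?_) ?_
  · exact ⟨{true}, measurableSet_singleton _, rfl⟩
  · rw [← measurable_iff_comap_le]
    exact @measurable_to_bool _ (_) _ (MeasurableSpace.measurableSet_generateFrom rfl)

/-- The joint labelling made of a pair of labellings. -/
def joint (ω : PercSpace d M × PercSpace d M) : Config d M :=
  fun i => bif i.1 then ω.2 i.2 else ω.1 i.2

lemma measurable_joint : Measurable (joint (d := d) (M := M)) := by
  refine measurable_pi_lambda _ fun ⟨σ, w⟩ => ?_
  cases σ
  · exact (measurable_pi_apply w).comp measurable_fst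
  · exact (measurable_pi_apply w).comp measurable_snd

variable {p₁ p₂ : ℝ} {P : Measure (PercSpace d M × PercSpace d M)}

lemma measure_forall_joint_eq_true (hP : IsIndepBernoulliPair d M p₁ p₂ P)
    (S : Finset (Bool × Word d M)) :
    P {ω | ∀ i ∈ S, joint ω i = true} = ∏ i ∈ S, ENNReal.ofReal (bif i.1 then p₂ else p₁) := by
  classical
  let part (σ : Bool) : Finset (Word d M) := {i ∈ S | i.1 = σ}.image Prod.snd
  have mem_part : ∀ σ w, w ∈ part σ ↔ (σ, w) ∈ S := by simp [part]
  have labels_eq : {ω : PercSpace d M × PercSpace d M | ∀ i ∈ S, joint ω i = true} =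
      {ω | (∀ w ∈ part false, ω.1 w = true) ∧ ∀ w ∈ part true, ω.2 w = true} := by
    ext ω
    simp [mem_part, joint, Bool.forall_bool]
  rw [labels_eq, hP.2 (part false) (part true) (fun _ => true) fun _ => true,
    Finset.prod_finset_product S Finset.univ part (by simp [mem_part]), Fintype.prod_bool, mul_comm]
  simp

lemma isPairPercolation_map_joint (hP : IsIndepBernoulliPair d M p₁ p₂ P) (hp₁ : 0 ≤ p₁)
    (hp₂ : 0 ≤ p₂) : IsPairPercolation (fun σ => bif σ then p₂ else p₁) (P.map joint) := by
  have hone : ∀ i : Bool × Word d M,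
      P {ω | joint ω i = true} = ENNReal.ofReal (bif i.1 then p₂ else p₁) := fun i => by
    simpa using measure_forall_joint_eq_true hP {i}
  have map_apply : ∀ s : Set (Config d M), MeasurableSet s → P.map joint s = P (joint ⁻¹' s) :=
    fun s hs => Measure.map_apply measurable_joint hs
  refine ⟨iIndepFun_of_iIndepSet_eq_true ((iIndepSet_iff_meas_biInter
    measurableSet_apply_eq_true).2 fun S => ?_), fun i => ?_⟩
  · rw [map_apply _ (S.measurableSet_biInter fun i _ => measurableSet_apply_eq_true i)]
    convert measure_forall_joint_eq_true hP S using 2 with i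
    · ext ω
      simp
    · rw [map_apply _ (measurableSet_apply_eq_true i)]
      exact hone i
  · rw [measureReal_def, map_apply _ (measurableSet_apply_eq_true i)]
    refine (congrArg ENNReal.toReal (hone i)).trans (ENNReal.toReal_ofReal ?_)
    cases i.1 <;> assumption

end Pair

section Limit

lemma retainedFrom_zero {ω : PercSpace d M} {w : List (Alpha d M)} :
    RetainedFrom 0 ω w ↔ Retained d M ω w :=
  ⟨fun h u hu huw => h u hu huw (List.length_pos_iff.2 hu), fun h u hu huw _ => h u hu huw⟩

lemma mem_approx {ω : PercSpace d M} {n : ℕ} {x : EuclideanSpace ℝ (Fin d)} :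
    x ∈ approx d M ω n ↔ ∃ w, (w.length = n ∧ Retained d M ω w) ∧ x ∈ wordCube d M w := by
  simp only [approx, mem_iUnion₂, mem_ofPred_eq, exists_prop]

lemma isCompact_wordCube (w : List (Alpha d M)) : IsCompact (wordCube d M w) := by
  have hcube : wordCube d M w = PiLp.homeomorph 2 (fun _ : Fin d => ℝ) ⁻¹'
      univ.pi fun i => Icc (wordBase d M w i) (wordBase d M w i + (M : ℝ)⁻¹ ^ w.length) := by
    ext x
    simp only [mem_wordCube, mem_preimage, mem_univ_pi]
    rfl
  rw [hcube, Homeomorph.isCompact_preimage]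
  exact isCompact_univ_pi fun _ => isCompact_Icc

lemma isCompact_approx (ω : PercSpace d M) (n : ℕ) : IsCompact (approx d M ω n) :=
  ((List.finite_length_eq (Alpha d M) n).subset fun _ hw => hw.1).isCompact_biUnion
    fun w _ => isCompact_wordCube w

lemma wordCube_concat_subset (w : List (Alpha d M)) (a : Alpha d M) :
    wordCube d M (w ++ [a]) ⊆ wordCube d M w := by
  intro x hx
  rw [mem_wordCube] at hx ⊢
  refine fun i => Icc_subset_Icc ?_ ?_ (hx i) <;>
    rw [wordBase_concat]
  · simpa using by positivity
  · have hM : (M : ℝ) ≠ 0 := by exact_mod_cast (a i).pos.ne'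
    have hle : ((a i : ℕ) : ℝ) + 1 ≤ M := by exact_mod_cast (a i).2
    calc _ = wordBase d M w i + ((a i : ℕ) + 1) * (M : ℝ)⁻¹ ^ (w.length + 1) := by simp; ring
      _ ≤ wordBase d M w i + M * (M : ℝ)⁻¹ ^ (w.length + 1) := by gcongr
      _ = _ := by rw [pow_succ', mul_inv_cancel_left₀ hM]

lemma antitone_approx (ω : PercSpace d M) : Antitone (approx d M ω) := by
  refine antitone_nat_of_succ_le fun n x hx => ?_
  obtain ⟨w, ⟨hw, hret⟩, hxw⟩ := mem_approx.1 hx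
  obtain rfl | ⟨u, a, rfl⟩ := List.eq_nil_or_concat' w
  · simp at hw
  · exact mem_approx.2 ⟨u, ⟨by simpa using hw,
      fun v hv hvu => hret v hv (hvu.trans (List.prefix_append _ _))⟩,
      wordCube_concat_subset u a hxw⟩

lemma survivors_joint_nonempty {ω : PercSpace d M × PercSpace d M}
    (h₁ : percLimit d M ω.1 ≠ ∅) (h₂ : percLimit d M ω.2 ≠ ∅) (n : ℕ) (σ : Bool) :
    (survivors 0 σ n (joint ω)).Nonempty := by
  have hσ : (percLimit d M (side σ (joint ω))).Nonempty :=
    nonempty_iff_ne_empty.2 (by cases σ; exacts [h₁, h₂])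
  obtain ⟨x, hx⟩ := hσ
  obtain ⟨w, ⟨hw, hret⟩, -⟩ := mem_approx.1
    (antitone_approx _ n.le_succ (mem_iInter₂.1 hx (n + 1) n.succ_pos))
  exact ⟨w, mem_survivors.2 ⟨hw, retainedFrom_zero.2 hret⟩⟩

lemma exists_dist_eq_of_forall_approx {ω₁ ω₂ : PercSpace d M} {r : ℝ} {N : ℕ}
    (h : ∀ n ≥ N, ∃ x ∈ approx d M ω₁ n, ∃ y ∈ approx d M ω₂ n, dist x y = r) :
    ∃ x ∈ percLimit d M ω₁, ∃ y ∈ percLimit d M ω₂, dist x y = r := by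
  let K (n : ℕ) : Set (EuclideanSpace ℝ (Fin d) × EuclideanSpace ℝ (Fin d)) :=
    (approx d M ω₁ (N + n) ×ˢ approx d M ω₂ (N + n)) ∩ {z | dist z.1 z.2 = r}
  have isCompact_K : ∀ n, IsCompact (K n) := fun n =>
    ((isCompact_approx ω₁ _).prod (isCompact_approx ω₂ _)).inter_right
      (isClosed_eq continuous_dist continuous_const)
  have K_anti : ∀ n, K (n + 1) ⊆ K n := fun n => inter_subset_inter_left _
    (prod_mono (antitone_approx _ (by omega)) (antitone_approx _ (by omega)))
  have K_nonempty : ∀ n, (K n).Nonempty := fun n => by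
    obtain ⟨x, hx, y, hy, hr⟩ := h (N + n) (by omega)
    exact ⟨(x, y), ⟨hx, hy⟩, hr⟩
  obtain ⟨z, hz⟩ := IsCompact.nonempty_iInter_of_sequence_nonempty_isCompact_isClosed K K_anti
    K_nonempty (isCompact_K 0) fun n => (isCompact_K n).isClosed
  rw [mem_iInter] at hz
  exact ⟨z.1, mem_iInter₂.2 fun n _ => antitone_approx _ (by omega) (hz n).1.1,
    z.2, mem_iInter₂.2 fun n _ => antitone_approx _ (by omega) (hz n).1.2, (hz 0).2⟩

lemma Hit.exists_dist_eq {ω : PercSpace d M × PercSpace d M} {n : ℕ} {r : ℝ}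
    (h : Hit 0 r n (joint ω)) : ∃ x ∈ approx d M ω.1 n, ∃ y ∈ approx d M ω.2 n, dist x y = r := by
  obtain ⟨u, hu, v, hv, x, hx, y, hy, hr⟩ := h
  rw [mem_survivors, retainedFrom_zero] at hu hv
  exact ⟨x, mem_approx.2 ⟨u, hu, hx⟩, y, mem_approx.2 ⟨v, hv, hy⟩,
    by rwa [dist_eq_norm, ← zero_add (x - y)]⟩

lemma exists_Ioo_subset_of_joint_mem {ω : PercSpace d M × PercSpace d M}
    (h : joint ω ∈ intervalEvent 0) : ∃ a b : ℝ, a < b ∧ Ioo a b ⊆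
      {r | ∃ x ∈ percLimit d M ω.1, ∃ y ∈ percLimit d M ω.2, r = dist x y} := by
  obtain ⟨a, b, hab, N, hN⟩ := h
  refine ⟨a, b, by exact_mod_cast hab, fun r hr => ?_⟩
  simpa only [mem_ofPred_eq, eq_comm (a := r)] using
    exists_dist_eq_of_forall_approx fun n hn => (hN n hn r hr).exists_dist_eq

end Limit

section Conclusion

lemma exists_growthRates_of_zpow_lt [NeZero M] (hd : 1 ≤ d) {p₁ p₂ : ℝ} (hp₁1 : p₁ ≤ 1)
    (hp₂1 : p₂ ≤ 1) (hp₁ : (M : ℝ) ^ (-(d : ℤ)) < p₁) (hp₂ : (M : ℝ) ^ (-(d : ℤ)) < p₂)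
    (hprod : (M : ℝ) ^ (1 - 2 * (d : ℤ)) < p₁ * p₂) :
    Nonempty (GrowthRates d M fun σ => bif σ then p₂ else p₁) := by
  have hM : (0 : ℝ) < M := by exact_mod_cast NeZero.pos M
  have hMd : (0 : ℝ) < (M : ℝ) ^ d := by positivity
  rw [zpow_neg, zpow_natCast, inv_lt_iff_one_lt_mul₀ hMd] at hp₁ hp₂
  rw [zpow_sub₀ hM.ne', zpow_one, two_mul, zpow_add₀ hM.ne', zpow_natCast,
    div_lt_iff₀ (mul_pos hMd hMd)] at hprod
  refine exists_growthRates hd ?_ ?_ ?_ hprod <;> rintro (_ | _)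
  any_goals assumption
  · exact pos_of_mul_pos_left (one_pos.trans hp₁) hMd.le
  · exact pos_of_mul_pos_left (one_pos.trans hp₂) hMd.le

end Conclusion

end FractalPercolation

open FractalPercolation

/-- if `p₁, p₂ > M⁻ᵈ` and `p₁ p₂ > M^{-2d+1}`, then conditioned on
both percolations being nonempty, almost surely the distance set `D(E₁, E₂)`
contains a nonempty open interval. -/
theorem distance_set_two_percolations
    (d M : ℕ) (hd : 1 ≤ d) (hM : 2 ≤ M)
    (p₁ p₂ : ℝ) (hp₁1 : p₁ ≤ 1) (hp₂1 : p₂ ≤ 1)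
    (hp₁ : (M : ℝ) ^ (-(d : ℤ)) < p₁) (hp₂ : (M : ℝ) ^ (-(d : ℤ)) < p₂)
    (hprod : (M : ℝ) ^ (1 - 2 * (d : ℤ)) < p₁ * p₂)
    (P : Measure (PercSpace d M × PercSpace d M))
    (hP : IsIndepBernoulliPair d M p₁ p₂ P) :
    ∀ᵐ ω ∂(ProbabilityTheory.cond P
        {ω | percLimit d M ω.1 ≠ ∅ ∧ percLimit d M ω.2 ≠ ∅}),
      ∃ a b : ℝ, a < b ∧ Set.Ioo a b ⊆
        {r | ∃ x ∈ percLimit d M ω.1, ∃ y ∈ percLimit d M ω.2, r = dist x y} := by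
  have : NeZero M := ⟨by omega⟩
  have : Nonempty (Fin d) := ⟨⟨0, hd⟩⟩
  have hp₁0 : 0 < p₁ := lt_trans (by positivity) hp₁
  have hp₂0 : 0 < p₂ := lt_trans (by positivity) hp₂
  have hpos : ∀ σ, 0 < bif σ then p₂ else p₁ := by rintro (_ | _) <;> assumption
  have hle : ∀ σ, (bif σ then p₂ else p₁) ≤ 1 := by rintro (_ | _) <;> assumption
  obtain ⟨R⟩ := exists_growthRates_of_zpow_lt hd hp₁1 hp₂1 hp₁ hp₂ hprod
  have hjoint := ae_of_ae_map measurable_joint.aemeasurable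
    (ae_mem_intervalEvent_of_survivors_nonempty hM R
      (isPairPercolation_map_joint hP hp₁0.le hp₂0.le) hpos hle)
  have hcond : ∀ᵐ ω ∂ProbabilityTheory.cond P
      {ω | percLimit d M ω.1 ≠ ∅ ∧ percLimit d M ω.2 ≠ ∅}, joint ω ∈ intervalEvent 0 := by
    refine Measure.ae_smul_measure ((ae_restrict_iff
      (measurable_joint (measurableSet_intervalEvent 0))).2 ?_) _
    filter_upwards [hjoint] with ω hω h
    exact hω (survivors_joint_nonempty h.1 h.2)
  filter_upwards [hcond] with ω hω using exists_Ioo_subset_of_joint_mem hω
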